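/- For an irreducible complex representation π of GL_n(F_q), define its asymptotic rank to be the least integer k such that, for all sufficiently large m, there exists a representation ρ_m of GL_m(F_q) of low U-rank at most k (i.e., rank_{⌊m/2⌋,⌈m/2⌉}(ρ_m) ≤ k and k < ⌊m/2⌋) whose restriction to GL_n(F_q) (embedded as the top-left n×n block, extended by the identity) contains π as a subrepresentation. Then for every irreducible representation π of GL_n(F_q), the asymptotic rank of π equals the tensor rank of π. -/

import Mathlib

/-!
STATEMENT 19: For every irreducible representation π of GL_n(F_q), the
asymptotic rank of π equals the tensor rank of π.
-/

open Matrix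
open scoped MatrixGroups

set_option linter.unusedSectionVars false

namespace Stmt19

variable {F : Type} [Field F] [Fintype F] [DecidableEq F]

/-- The `n × n` matrix with the `a × b` matrix `X` placed in the block occupying
rows `0,…,a-1` and columns `n-b,…,n-1`, and `0` elsewhere. -/
def blockEmbed (n a b : ℕ) (X : Matrix (Fin a) (Fin b) F) : Matrix (Fin n) (Fin n) F :=
  Matrix.of fun i j =>
    if hi : (i : ℕ) < a then
      if hj : n - b ≤ (j : ℕ) ∧ (j : ℕ) - (n - b) < b then
        X ⟨i, hi⟩ ⟨(j : ℕ) - (n - b), hj.2⟩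
      else 0
    else 0

lemma blockEmbed_mul_blockEmbed {n a b : ℕ} (hab : a + b ≤ n)
    (X Y : Matrix (Fin a) (Fin b) F) :
    blockEmbed n a b X * blockEmbed n a b Y = 0 := by
  ext i j
  rw [Matrix.mul_apply, Matrix.zero_apply]
  apply Finset.sum_eq_zero
  intro k _
  rcases Nat.lt_or_ge (k : ℕ) a with hk | hk
  · have h2 : ¬ (n - b ≤ (k : ℕ) ∧ (k : ℕ) - (n - b) < b) := by
      rintro ⟨h, -⟩; omega
    have hz : blockEmbed n a b X i k = 0 := by
      unfold blockEmbed
      by_cases hi : (i : ℕ) < a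
      · rw [Matrix.of_apply, dif_pos hi, dif_neg h2]
      · rw [Matrix.of_apply, dif_neg hi]
    rw [hz, zero_mul]
  · have hz : blockEmbed n a b Y k j = 0 := by
      unfold blockEmbed
      rw [Matrix.of_apply, dif_neg (Nat.not_lt.2 hk)]
    rw [hz, mul_zero]

/-- The element `I_n + blockEmbed X` of `GL_n(F)`; for `a + b ≤ n` these elements
form the abelian subgroup `U_{a,b}` (identified with `(M_{a,b}(F), +)`). -/
def uU (n a b : ℕ) (hab : a + b ≤ n) (X : Matrix (Fin a) (Fin b) F) : GL (Fin n) F where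
  val := 1 + blockEmbed n a b X
  inv := 1 - blockEmbed n a b X
  val_inv := by
    have h := blockEmbed_mul_blockEmbed hab X X
    have e : (1 + blockEmbed n a b X) * (1 - blockEmbed n a b X)
        = 1 - blockEmbed n a b X * blockEmbed n a b X := by noncomm_ring
    rw [e, h, sub_zero]
  inv_val := by
    have h := blockEmbed_mul_blockEmbed hab X X
    have e : (1 - blockEmbed n a b X) * (1 + blockEmbed n a b X)
        = 1 - blockEmbed n a b X * blockEmbed n a b X := by noncomm_ring
    rw [e, h, sub_zero]

variable {V : Type} [AddCommGroup V] [Module ℂ V]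

/-- The character `γ_T` of `U_{a,b} ≅ M_{a,b}(F_q)`, `γ_T(X) = χ₀(trace (T*X))`,
appears in (the restriction to `U_{a,b}` of) the representation `π`, i.e. its
eigenspace is nonzero. -/
def CharAppears (χ₀ : AddChar F ℂ) {n : ℕ} (π : Representation ℂ (GL (Fin n) F) V)
    {a b : ℕ} (hab : a + b ≤ n) (T : Matrix (Fin b) (Fin a) F) : Prop :=
  ∃ v : V, v ≠ 0 ∧ ∀ X : Matrix (Fin a) (Fin b) F,
    π (uU n a b hab X) v = χ₀ ((T * X).trace) • v

/-- `rank_{a,b}(π) = k` : the maximal rank of a character of `U_{a,b}`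
appearing in `π|U_{a,b}` is `k`.  (The rank of `γ_T` is `rank T`.) -/
def HasRankAB (χ₀ : AddChar F ℂ) {n : ℕ} (π : Representation ℂ (GL (Fin n) F) V)
    {a b : ℕ} (hab : a + b ≤ n) (k : ℕ) : Prop :=
  (∃ T, CharAppears χ₀ π hab T ∧ T.rank = k) ∧
  (∀ T, CharAppears χ₀ π hab T → T.rank ≤ k)


/-- The `U`-rank of a representation `π` of `GL_n(F_q)` equals `k`:
this is `rank_{⌊n/2⌋,⌈n/2⌉}(π) = k`. -/
def HasURank (χ₀ : AddChar F ℂ) {n : ℕ} (π : Representation ℂ (GL (Fin n) F) V) (k : ℕ) : Prop :=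
  HasRankAB χ₀ π (show n / 2 + (n - n / 2) ≤ n by omega) k

/-- The subgroup `H_k ≤ GL_n(F)` of elements fixing the first `k` standard
basis vectors of `F^n` (equivalently, fixing pointwise every vector supported
in the first `k` coordinates). -/
def Hsub (n k : ℕ) : Subgroup (GL (Fin n) F) where
  carrier := {g | ∀ v : Fin n → F, (∀ i : Fin n, k ≤ (i : ℕ) → v i = 0) →
      (↑g : Matrix (Fin n) (Fin n) F) *ᵥ v = v}
  one_mem' := by intro v hv; simp
  mul_mem' := by
    intro g h hg hh v hv
    rw [Units.val_mul, ← Matrix.mulVec_mulVec, hh v hv, hg v hv]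
  inv_mem' := by
    intro g hg v hv
    calc (↑g⁻¹ : Matrix (Fin n) (Fin n) F) *ᵥ v
        = (↑g⁻¹ : Matrix (Fin n) (Fin n) F) *ᵥ ((↑g : Matrix (Fin n) (Fin n) F) *ᵥ v) := by
          rw [hg v hv]
      _ = ((↑g⁻¹ * ↑g : Matrix (Fin n) (Fin n) F)) *ᵥ v := Matrix.mulVec_mulVec ..
      _ = v := by rw [← Units.val_mul, inv_mul_cancel, Units.val_one, Matrix.one_mulVec]

/-- The permutation representation of `GL_n(F)` on complex-valued functions on
`M_{n,k}(F)`, by left matrix multiplication: `(g · f)(T) = f (g⁻¹ * T)`. -/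
def permRep (n k : ℕ) : Representation ℂ (GL (Fin n) F) (Matrix (Fin n) (Fin k) F → ℂ) where
  toFun g :=
    { toFun := fun f T => f ((↑g⁻¹ : Matrix (Fin n) (Fin n) F) * T)
      map_add' := fun _ _ => rfl
      map_smul' := fun _ _ => rfl }
  map_one' := by
    refine LinearMap.ext fun f => funext fun T => ?_
    show f ((↑(1 : GL (Fin n) F)⁻¹ : Matrix (Fin n) (Fin n) F) * T) = f T
    congr 1
    simp
  map_mul' := by
    intro g h
    refine LinearMap.ext fun f => funext fun T => ?_
    show f _ = f _
    congr 1
    simp [_root_.mul_inv_rev, Units.val_mul, Matrix.mul_assoc]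

/-- The determinant character `GL_n(F) → Fˣ`. -/
def detHom (n : ℕ) : GL (Fin n) F →* Fˣ :=
  Units.map Matrix.detMonoidHom

/-- The twist `(α ∘ det) ⊗ ρ` of a representation `ρ` of `GL_n(F)` by the
linear character `α ∘ det`. -/
def twistRep {n : ℕ} {V : Type} [AddCommGroup V] [Module ℂ V]
    (α : Fˣ →* ℂˣ) (ρ : Representation ℂ (GL (Fin n) F) V) :
    Representation ℂ (GL (Fin n) F) V where
  toFun g := ((α (detHom n g) : ℂˣ) : ℂ) • ρ g
  map_one' := by simp
  map_mul' := by
    intro g h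
    show ((α (detHom n (g * h)) : ℂˣ) : ℂ) • ρ (g * h)
        = (((α (detHom n g) : ℂˣ) : ℂ) • ρ g) * (((α (detHom n h) : ℂˣ) : ℂ) • ρ h)
    rw [smul_mul_assoc, mul_smul_comm, smul_smul, ← Units.val_mul, ← _root_.map_mul,
      ← _root_.map_mul, _root_.map_mul ρ]

/-- `ρ` occurs in `σ` : there is a nonzero intertwining operator from `ρ` to
`σ`.  (For irreducible `ρ` this says exactly that `ρ` occurs as a
subrepresentation of `σ`.) -/
def Occurs {G : Type} [Group G] {V W : Type} [AddCommGroup V] [Module ℂ V]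
    [AddCommGroup W] [Module ℂ W]
    (ρ : Representation ℂ G V) (σ : Representation ℂ G W) : Prop :=
  ∃ φ : V →ₗ[ℂ] W, φ ≠ 0 ∧ ∀ g, φ.comp (ρ g) = (σ g).comp φ

/-- `ρ` has a nonzero vector fixed by the subgroup `H`. -/
def HasFixedVec {G : Type} [Group G] {V : Type} [AddCommGroup V] [Module ℂ V]
    (ρ : Representation ℂ G V) (H : Subgroup G) : Prop :=
  ∃ v : V, v ≠ 0 ∧ ∀ h ∈ H, ρ h v = v

/-- `ρ` has a nonzero eigenvector for the subgroup `H`: a nonzero `v` with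
`ρ(h) v = c(h) • v` for all `h ∈ H`, for some character `c` of `H`. -/
def HasEigenVec {G : Type} [Group G] {V : Type} [AddCommGroup V] [Module ℂ V]
    (ρ : Representation ℂ G V) (H : Subgroup G) : Prop :=
  ∃ c : H →* ℂ, ∃ v : V, v ≠ 0 ∧ ∀ h : H, ρ (h : G) v = c h • v

/-- Irreducibility of a representation: the space is nonzero, and the only
invariant subspaces are `⊥` and `⊤`. -/
def IsIrred {G : Type} [Group G] {V : Type} [AddCommGroup V] [Module ℂ V]
    (ρ : Representation ℂ G V) : Prop :=
  (∃ v : V, v ≠ 0) ∧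
    ∀ p : Submodule ℂ V, (∀ g : G, ∀ v ∈ p, ρ g v ∈ p) → p = ⊥ ∨ p = ⊤

/-- The multiplicative embedding `A ↦ fromBlocks A 0 0 1` of `m × m` matrices
into `(Fin m ⊕ Fin r) × (Fin m ⊕ Fin r)` matrices. -/
def blockDiagHom (m r : ℕ) : Matrix (Fin m) (Fin m) F →* Matrix (Fin m ⊕ Fin r) (Fin m ⊕ Fin r) F where
  toFun A := Matrix.fromBlocks A 0 0 1
  map_one' := Matrix.fromBlocks_one
  map_mul' := by
    intro A B
    rw [Matrix.fromBlocks_multiply]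
    simp

/-- The standard embedding `GL_m(F) → GL_n(F)`, `A ↦ diag(A, I_{n-m})`
(top-left `m × m` block, extended by the identity matrix). -/
def glEmbed {m n : ℕ} (h : m ≤ n) : GL (Fin m) F →* GL (Fin n) F :=
  Units.map
    (((Matrix.reindexAlgEquiv F F
        ((finSumFinEquiv (m := m) (n := n - m)).trans (finCongr (by omega)))).toRingEquiv.toMonoidHom).comp
      (blockDiagHom m (n - m)))

/-- `π` has asymptotic rank at most `k` : for all sufficiently large `m` there
is a representation `ρ_m` of `GL_m(F_q)` of low `U`-rank at most `k`
(i.e. `rank_{⌊m/2⌋,⌈m/2⌉}(ρ_m) ≤ k` and `k < ⌊m/2⌋`) whose restriction to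
`GL_n(F_q)`, embedded as the top-left `n × n` block extended by the identity,
contains `π` as a subrepresentation. -/
def AsympRankLE (χ₀ : AddChar F ℂ) {n : ℕ} {V : Type} [AddCommGroup V] [Module ℂ V]
    (π : Representation ℂ (GL (Fin n) F) V) (k : ℕ) : Prop :=
  ∃ M : ℕ, ∀ m : ℕ, M ≤ m →
    ∃ (h : n ≤ m) (Vm : Type) (_ : AddCommGroup Vm) (_ : Module ℂ Vm)
      (_ : FiniteDimensional ℂ Vm) (ρm : Representation ℂ (GL (Fin m) F) Vm),
      k < m / 2 ∧
      (∀ T, CharAppears χ₀ ρm (show m / 2 + (m - m / 2) ≤ m by omega) T → T.rank ≤ k) ∧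
      Occurs π (ρm.comp (glEmbed h))


/-- A nontrivial character detects nonzero scalars. -/
lemma chi_detect (χ₀ : AddChar F ℂ) (hχ₀ : χ₀ ≠ 1) (s : F) (h : ∀ c : F, χ₀ (c * s) = 1) :
    s = 0 := by
  by_contra hs
  apply hχ₀
  ext x
  have := h (x * s⁻¹)
  rwa [mul_assoc, inv_mul_cancel₀ hs, mul_one] at this

/-- Extension of eigencharacters for a finite `F`-vector space acting on `V`. -/
lemma ext_lemma (χ₀ : AddChar F ℂ) (hχ₀ : χ₀ ≠ 1) {B : Type} [AddCommGroup B] [Module F B]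
    [Finite B] (σ : B → V →ₗ[ℂ] V) (hadd : ∀ x y v, σ (x + y) v = σ x (σ y v))
    (h0 : ∀ v, σ 0 v = v) (v : V) (hv0 : v ≠ 0) (B' : Submodule F B) (ℓ' : B →ₗ[F] F)
    (hv : ∀ x ∈ B', σ x v = χ₀ (ℓ' x) • v) (b0 : B) :
    ∃ (ℓ : B →ₗ[F] F) (v' : V), v' ≠ 0 ∧ (∀ x, σ x v' = χ₀ (ℓ x) • v') ∧
      (∀ x ∈ B', ℓ x = ℓ' x) ∧ (σ b0 v ≠ v → ℓ b0 ≠ 0) := by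
  classical
  have : Fintype B := Fintype.ofFinite B
  have : Finite (B →ₗ[F] F) := Finite.of_injective (fun f => (f : B → F)) DFunLike.coe_injective
  have : Fintype (B →ₗ[F] F) := Fintype.ofFinite _
  let p : (B →ₗ[F] F) → V := fun ℓ => ∑ x, χ₀ (-ℓ x) • σ x v
  have hcomm : ∀ x y w, σ x (σ y w) = σ y (σ x w) := by
    intro x y w; rw [← hadd, ← hadd, add_comm]
  have hp1 : ∀ ℓ y, σ y (p ℓ) = χ₀ (ℓ y) • p ℓ := by
    intro ℓ y
    simp only [p, map_sum, map_smul, Finset.smul_sum]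
    refine Fintype.sum_equiv (Equiv.addLeft y) _ _ fun x => ?_
    simp only [Equiv.coe_addLeft, map_add, neg_add, smul_smul]
    rw [hadd, ← AddChar.map_add_eq_mul]
    simp
  have hp2 : ∀ ℓ, p ℓ ≠ 0 → ∀ x ∈ B', ℓ x = ℓ' x := by
    intro ℓ hℓ
    have key : ∀ x ∈ B', χ₀ (ℓ x) = χ₀ (ℓ' x) := by
      intro x hx
      have h1 := hp1 ℓ x
      have h2 : σ x (p ℓ) = χ₀ (ℓ' x) • p ℓ := by
        simp only [p, map_sum, map_smul, Finset.smul_sum]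
        refine Finset.sum_congr rfl fun y _ => ?_
        rw [hcomm, hv x hx, map_smul, smul_comm]
      rw [h1] at h2
      exact smul_left_injective ℂ hℓ h2
    intro x hx
    rw [← sub_eq_zero]
    apply chi_detect χ₀ hχ₀
    intro c
    have := key (c • x) (B'.smul_mem c hx)
    simp only [map_smul, smul_eq_mul] at this
    rw [mul_sub, sub_eq_add_neg, AddChar.map_add_eq_mul, this, ← AddChar.map_add_eq_mul]
    simp
  have hsum : ∑ ℓ, p ℓ = (Fintype.card (B →ₗ[F] F) : ℂ) • v := by
    simp only [p]
    rw [Finset.sum_comm]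
    have : ∀ x : B, ∑ ℓ : B →ₗ[F] F, χ₀ (-ℓ x) • σ x v
        = if x = 0 then (Fintype.card (B →ₗ[F] F) : ℂ) • v else 0 := by
      intro x
      rw [← Finset.sum_smul]
      split_ifs with hx
      · subst hx; simp [h0]
      · let ψ : AddChar (B →ₗ[F] F) ℂ :=
          { toFun := fun ℓ => χ₀ (-ℓ x)
            map_zero_eq_one' := by simp
            map_add_eq_mul' := by
              intro a b
              rw [← AddChar.map_add_eq_mul]; congr 1; simp [add_comm] }
        have hψ : ψ ≠ 0 := by
          intro h
          obtain ⟨f, hf⟩ := Module.Projective.exists_dual_ne_zero F hx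
          apply hf
          apply chi_detect χ₀ hχ₀
          intro c
          have := DFunLike.congr_fun h (-(c • f))
          simpa [ψ] using this
        have := AddChar.sum_eq_zero_iff_ne_zero.2 hψ
        have h2 : ∑ ℓ : B →ₗ[F] F, χ₀ (-ℓ x) = 0 := this
        rw [h2, zero_smul]
    rw [Finset.sum_congr rfl fun x _ => this x]
    simp
  have hcard : (Fintype.card (B →ₗ[F] F) : ℂ) ≠ 0 := Nat.cast_ne_zero.2 Fintype.card_ne_zero
  by_contra hcon
  push Not at hcon
  have hz : ∀ ℓ, (σ b0 v ≠ v → ℓ b0 ≠ 0) → p ℓ = 0 := by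
    intro ℓ hℓ
    by_contra hne
    obtain ⟨h1, h2⟩ := hcon ℓ (p ℓ) hne (hp1 ℓ) (hp2 ℓ hne)
    exact hℓ h1 h2
  by_cases hb : σ b0 v = v
  · have : ∑ ℓ, p ℓ = 0 := Finset.sum_eq_zero fun ℓ _ => hz ℓ (fun h => absurd hb h)
    rw [hsum] at this
    exact (smul_ne_zero hcard hv0) this
  · have hfix : ∀ ℓ, σ b0 (p ℓ) = p ℓ := by
      intro ℓ
      by_cases h : ℓ b0 = 0
      · rw [hp1, h]; simp
      · rw [hz ℓ (fun _ => h)]; simp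
    have : σ b0 (∑ ℓ, p ℓ) = ∑ ℓ, p ℓ := by
      rw [map_sum]; exact Finset.sum_congr rfl fun ℓ _ => hfix ℓ
    rw [hsum, map_smul] at this
    exact hb (smul_right_injective V hcard this)

/-- Any two injective matrices are related by an element of `GL`. -/
lemma inj_lemma {m : ℕ} {ι : Type} [Fintype ι] [DecidableEq ι] (T T' : Matrix (Fin m) ι F)
    (hT : ∀ a : ι → F, T *ᵥ a = 0 → a = 0) (hT' : ∀ a : ι → F, T' *ᵥ a = 0 → a = 0) :
    ∃ g : GL (Fin m) F, (g : Matrix (Fin m) (Fin m) F) * T = T' := by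
  have h1 : Function.Injective T.mulVecLin := by
    rw [injective_iff_map_eq_zero]; exact hT
  have h2 : Function.Injective T'.mulVecLin := by
    rw [injective_iff_map_eq_zero]; exact hT'
  let e1 := LinearEquiv.ofInjective _ h1
  let e2 := LinearEquiv.ofInjective _ h2
  obtain ⟨g, hg⟩ := Submodule.exists_linearEquiv_restrict_eq (e1.symm.trans e2)
  refine ⟨⟨LinearMap.toMatrix' g.toLinearMap, LinearMap.toMatrix' g.symm.toLinearMap, ?_, ?_⟩, ?_⟩
  · rw [← LinearMap.toMatrix'_comp]; simp
  · rw [← LinearMap.toMatrix'_comp]; simp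
  · apply Matrix.ext_of_mulVec_single
    intro j
    have := hg (e1 (Pi.single j 1))
    simp only [LinearEquiv.trans_apply, LinearEquiv.symm_apply_apply] at this
    show (LinearMap.toMatrix' g.toLinearMap * T) *ᵥ _ = _
    rw [← Matrix.mulVec_mulVec, LinearMap.toMatrix'_mulVec]
    exact this.symm

/-- `1 + x yᵀ` with `y ⬝ x = 0`. -/
def tv {m : ℕ} (x y : Fin m → F) (h : y ⬝ᵥ x = 0) : GL (Fin m) F where
  val := 1 + vecMulVec x y
  inv := 1 - vecMulVec x y
  val_inv := by
    have : vecMulVec x y * vecMulVec x y = 0 := by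
      rw [vecMulVec_mul_vecMulVec, h]; simp
    have e : (1 + vecMulVec x y) * (1 - vecMulVec x y) = 1 - vecMulVec x y * vecMulVec x y := by
      noncomm_ring
    rw [e, this, sub_zero]
  inv_val := by
    have : vecMulVec x y * vecMulVec x y = 0 := by
      rw [vecMulVec_mul_vecMulVec, h]; simp
    have e : (1 - vecMulVec x y) * (1 + vecMulVec x y) = 1 - vecMulVec x y * vecMulVec x y := by
      noncomm_ring
    rw [e, this, sub_zero]

/-- The diagonal matrix with a single entry `a` at `z`. -/
def dl {m : ℕ} (z : Fin m) (a : Fˣ) : GL (Fin m) F where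
  val := diagonal (Pi.mulSingle z (a : F))
  inv := diagonal (Pi.mulSingle z ((a⁻¹ : Fˣ) : F))
  val_inv := by
    rw [diagonal_mul_diagonal, ← diagonal_one]; congr 1; ext i
    by_cases h : i = z
    · subst h; simp
    · simp [Pi.mulSingle_eq_of_ne h]
  inv_val := by
    rw [diagonal_mul_diagonal, ← diagonal_one]; congr 1; ext i
    by_cases h : i = z
    · subst h; simp
    · simp [Pi.mulSingle_eq_of_ne h]

lemma tv_mulVec {m : ℕ} (x y : Fin m → F) (h : y ⬝ᵥ x = 0) (u : Fin m → F) :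
    (tv x y h : Matrix (Fin m) (Fin m) F) *ᵥ u = u + (y ⬝ᵥ u) • x := by
  show (1 + vecMulVec x y) *ᵥ u = _
  rw [add_mulVec, one_mulVec, vecMulVec_mulVec]
  simp

/-- Generation of the pointwise stabilizer of the first `t` basis vectors. -/
lemma gen_lemma {m : ℕ} (Γ : Subgroup (GL (Fin m) F)) (z : Fin m) (hz : (z : ℕ) + 1 = m)
    (hdl : ∀ a, dl z a ∈ Γ) (d : ℕ) : ∀ (t : ℕ), t + d + 1 = m →
    (∀ x y h, (∀ j : Fin m, (j : ℕ) < t → y j = 0) → tv x y h ∈ Γ) →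
    ∀ h : GL (Fin m) F, (∀ j : Fin m, (j : ℕ) < t →
      (h : Matrix (Fin m) (Fin m) F) *ᵥ Pi.single j 1 = Pi.single j 1) → h ∈ Γ := by
  induction d with
  | zero =>
    intro t ht htv h hh
    have hinj : Function.Injective ((h : Matrix (Fin m) (Fin m) F) *ᵥ ·) := by
      intro a b hab
      have := congrArg (fun u => ((h⁻¹ : GL (Fin m) F) : Matrix (Fin m) (Fin m) F) *ᵥ u) hab
      simpa [Matrix.mulVec_mulVec, ← Units.val_mul] using this
    set u := (h : Matrix (Fin m) (Fin m) F) *ᵥ Pi.single z 1 with hu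
    have huz : u z ≠ 0 := by
      intro h0
      have e : (h : Matrix (Fin m) (Fin m) F) *ᵥ u = u := by
        have hs : u = ∑ j, u j • (Pi.single j 1 : Fin m → F) := by
          ext i; simp [Finset.sum_apply, Pi.single_apply]
        conv_lhs => rw [hs]
        conv_rhs => rw [hs]
        rw [Matrix.mulVec_sum]
        refine Finset.sum_congr rfl fun j _ => ?_
        rw [Matrix.mulVec_smul]
        by_cases hj : j = z
        · subst hj; simp [h0]
        · rw [hh j (by have := j.2; have : (j : ℕ) ≠ z := fun h => hj (Fin.ext h); omega)]
      have := hinj (e.trans hu)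
      rw [this] at h0
      simp at h0
    let a : Fˣ := Units.mk0 _ huz
    let x : Fin m → F := (u z)⁻¹ • (u - u z • Pi.single z 1)
    have hx : (Pi.single z 1 : Fin m → F) ⬝ᵥ x = 0 := by simp [x]
    have : h = tv x (Pi.single z 1) hx * dl z a := by
      apply Units.ext
      apply Matrix.ext_of_mulVec_single
      intro j
      rw [Units.val_mul, ← Matrix.mulVec_mulVec]
      have hd : (dl z a : Matrix (Fin m) (Fin m) F) *ᵥ Pi.single j 1
          = (Pi.mulSingle z (u z) : Fin m → F) j • Pi.single j 1 := by
        show diagonal _ *ᵥ _ = _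
        simp [a]
        ext i; simp [Pi.single_apply]
      rw [hd, Matrix.mulVec_smul, tv_mulVec]
      by_cases hj : j = z
      · subst hj
        simp only [Pi.mulSingle_eq_same, x, ← hu]
        simp [smul_smul, huz]
      · rw [hh j (by have := j.2; have : (j : ℕ) ≠ z := fun h => hj (Fin.ext h); omega)]
        simp [Pi.mulSingle_eq_of_ne hj, Pi.single_apply, hj, Ne.symm hj]
    rw [this]
    refine Γ.mul_mem (htv _ _ _ ?_) (hdl a)
    intro j hj
    rw [Pi.single_apply, if_neg]
    rintro rfl; omega
  | succ d ih =>
    intro t ht htv h hh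
    have ih' := ih (t + 1) (by omega) (fun x y hxy hy => htv x y hxy (fun j hj => hy j (by omega)))
    let p : Fin m := ⟨t, by omega⟩
    let p' : Fin m := ⟨t + 1, by omega⟩
    -- elements fixing the first t vectors and sending u to e_p
    have hfin : ∀ g ∈ Γ, (∀ j : Fin m, (j : ℕ) < t →
        (g : Matrix (Fin m) (Fin m) F) *ᵥ Pi.single j 1 = Pi.single j 1) →
        (g : Matrix (Fin m) (Fin m) F) *ᵥ ((h : Matrix (Fin m) (Fin m) F) *ᵥ Pi.single p 1)
          = Pi.single p 1 → h ∈ Γ := by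
      intro g hg hgf hgu
      have : g * h ∈ Γ := by
        apply ih'
        intro j hj
        rw [Units.val_mul, ← Matrix.mulVec_mulVec]
        by_cases hjt : (j : ℕ) < t
        · rw [hh j hjt, hgf j hjt]
        · have : j = p := Fin.ext (by simp [p]; omega)
          rw [this, hgu]
      exact (Subgroup.mul_mem_cancel_left Γ hg).1 this
    have caseA : ∀ u : Fin m → F, (∃ j : Fin m, t < (j : ℕ) ∧ u j ≠ 0) →
        ∃ g ∈ Γ, (∀ j : Fin m, (j : ℕ) < t →
        (g : Matrix (Fin m) (Fin m) F) *ᵥ Pi.single j 1 = Pi.single j 1) ∧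
        (g : Matrix (Fin m) (Fin m) F) *ᵥ u = Pi.single p 1 := by
      rintro u ⟨j, hj, huj⟩
      let y : Fin m → F := Pi.single p 1 + ((1 - u p) / u j) • Pi.single j 1
      have hjp : j ≠ p := by rintro rfl; simp [p] at hj
      have hyu : y ⬝ᵥ u = 1 := by
        simp [y, add_dotProduct]; field_simp; ring
      have hyp : y ⬝ᵥ Pi.single p 1 = 1 := by
        simp [y, Pi.single_apply, Ne.symm hjp]
      have hyx : y ⬝ᵥ (Pi.single p 1 - u) = 0 := by
        rw [dotProduct_sub, hyu, hyp, sub_self]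
      have hy0 : ∀ i : Fin m, (i : ℕ) < t → y i = 0 := by
        intro i hi
        have h1 : i ≠ p := by rintro rfl; simp [p] at hi
        have h2 : i ≠ j := by rintro rfl; omega
        simp [y, Pi.single_apply, h1, h2]
      refine ⟨tv _ y hyx, htv _ _ _ hy0, ?_, ?_⟩
      · intro i hi
        rw [tv_mulVec]
        simp [hy0 i hi]
      · rw [tv_mulVec, hyu]; simp
    set u := (h : Matrix (Fin m) (Fin m) F) *ᵥ Pi.single p 1 with hu
    by_cases hA : ∃ j : Fin m, t < (j : ℕ) ∧ u j ≠ 0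
    · obtain ⟨g, h1, h2, h3⟩ := caseA u hA
      exact hfin g h1 h2 h3
    · push Not at hA
      have hup : u p ≠ 0 := by
        intro h0
        have hinj : Function.Injective ((h : Matrix (Fin m) (Fin m) F) *ᵥ ·) := by
          intro a b hab
          have := congrArg (fun u => ((h⁻¹ : GL (Fin m) F) : Matrix (Fin m) (Fin m) F) *ᵥ u) hab
          simpa [Matrix.mulVec_mulVec, ← Units.val_mul] using this
        have e : (h : Matrix (Fin m) (Fin m) F) *ᵥ u = u := by
          have hs : u = ∑ j, u j • (Pi.single j 1 : Fin m → F) := by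
            ext i; simp [Finset.sum_apply, Pi.single_apply]
          conv_lhs => rw [hs]
          conv_rhs => rw [hs]
          rw [Matrix.mulVec_sum]
          refine Finset.sum_congr rfl fun j _ => ?_
          rw [Matrix.mulVec_smul]
          rcases lt_trichotomy (j : ℕ) t with hj | hj | hj
          · rw [hh j hj]
          · have : j = p := Fin.ext hj
            rw [this, h0]; simp
          · rw [hA j hj]; simp
        have := hinj (e.trans hu)
        rw [this] at h0
        simp at h0
      have hpp : p ≠ p' := by simp [p, p', Fin.ext_iff]
      have hy : (Pi.single p 1 : Fin m → F) ⬝ᵥ Pi.single p' 1 = 0 := by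
        simp [Pi.single_apply, hpp]
      have h1mem : tv (Pi.single p' 1) (Pi.single p 1) hy ∈ Γ := by
        apply htv
        intro j hj
        rw [Pi.single_apply, if_neg]
        rintro rfl; simp [p] at hj
      obtain ⟨g, h1, h2, h3⟩ := caseA
        ((tv (Pi.single p' 1) (Pi.single p 1) hy : Matrix (Fin m) (Fin m) F) *ᵥ u)
        ⟨p', by simp [p'], by
          rw [tv_mulVec]
          simp [hA p' (by simp [p']), hup]⟩
      refine hfin (g * tv (Pi.single p' 1) (Pi.single p 1) hy) (Γ.mul_mem h1 h1mem) ?_ ?_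
      · intro j hj
        have hjp : j ≠ p := by rintro rfl; simp [p] at hj
        rw [Units.val_mul, ← Matrix.mulVec_mulVec, tv_mulVec]
        simp only [single_dotProduct, one_mul, Pi.single_apply, if_neg (Ne.symm hjp), zero_smul,
          add_zero]
        exact h2 j hj
      · rw [Units.val_mul, ← Matrix.mulVec_mulVec, h3]

/-- Columns: the first `s` standard basis vectors. -/
def P0 (F : Type) [Field F] (m s : ℕ) : Matrix (Fin m) (Fin s) F := Matrix.of fun x j => if (x : ℕ) = j then 1 else 0
/-- Columns: the last `s` standard basis vectors. -/
def S0 (F : Type) [Field F] (m s : ℕ) : Matrix (Fin m) (Fin s) F :=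
  Matrix.of fun x j => if (x : ℕ) = m - s + j then 1 else 0

lemma P0_mulVec {m s : ℕ} (a : Fin s → F) (x : Fin m) :
    (P0 F m s *ᵥ a) x = if h : (x : ℕ) < s then a ⟨x, h⟩ else 0 := by
  simp only [P0, Matrix.mulVec, dotProduct, Matrix.of_apply, ite_mul, one_mul, zero_mul]
  split_ifs with h
  · rw [Finset.sum_eq_single ⟨x, h⟩]
    · simp
    · intro b _ hb
      rw [if_neg]
      intro h'
      exact hb (Fin.ext h'.symm)
    · simp
  · apply Finset.sum_eq_zero
    intro j _
    rw [if_neg]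
    have := j.2
    omega

lemma S0_mulVec {m s : ℕ} (a : Fin s → F) (x : Fin m) :
    (S0 F m s *ᵥ a) x = if h : m - s ≤ (x : ℕ) ∧ (x : ℕ) - (m - s) < s then
      a ⟨x - (m - s), h.2⟩ else 0 := by
  simp only [S0, Matrix.mulVec, dotProduct, Matrix.of_apply, ite_mul, one_mul, zero_mul]
  split_ifs with h
  · rw [Finset.sum_eq_single ⟨x - (m - s), h.2⟩]
    · rw [if_pos]
      show (x : ℕ) = m - s + (x - (m - s))
      omega
    · intro b _ hb
      rw [if_neg]
      intro h'
      apply hb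
      apply Fin.ext
      show (b : ℕ) = x - (m - s)
      omega
    · simp
  · apply Finset.sum_eq_zero
    intro j _
    rw [if_neg]
    have := j.2
    omega

lemma mat_ext_mulVec {ι κ : Type} [Fintype κ] [DecidableEq κ] {A B : Matrix ι κ F}
    (h : ∀ v, A *ᵥ v = B *ᵥ v) : A = B := by
  ext i j
  have := congrFun (h (Pi.single j 1)) i
  simpa using this

lemma P0_mul_apply {m s : ℕ} {ι : Type} (A : Matrix (Fin s) ι F) (x : Fin m) (j : ι) :
    (P0 F m s * A) x j = if h : (x : ℕ) < s then A ⟨x, h⟩ j else 0 :=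
  P0_mulVec (fun l => A l j) x

lemma S0_mul_apply {m s : ℕ} {ι : Type} (A : Matrix (Fin s) ι F) (x : Fin m) (j : ι) :
    (S0 F m s * A) x j = if h : m - s ≤ (x : ℕ) ∧ (x : ℕ) - (m - s) < s then
      A ⟨x - (m - s), h.2⟩ j else 0 :=
  S0_mulVec (fun l => A l j) x

lemma mul_S0T_apply {m s : ℕ} {ι : Type} (A : Matrix ι (Fin s) F) (x : Fin m) (i : ι) :
    (A * (S0 F m s)ᵀ) i x = if h : m - s ≤ (x : ℕ) ∧ (x : ℕ) - (m - s) < s then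
      A i ⟨x - (m - s), h.2⟩ else 0 := by
  have : (A * (S0 F m s)ᵀ) = (S0 F m s * Aᵀ)ᵀ := by simp [Matrix.transpose_mul]
  rw [this, Matrix.transpose_apply, S0_mul_apply]
  rfl

lemma blockEmbed_eq {m a b : ℕ} (X : Matrix (Fin a) (Fin b) F) :
    blockEmbed m a b X = P0 F m a * X * (S0 F m b)ᵀ := by
  ext i j
  rw [Matrix.mul_assoc, P0_mul_apply]
  simp only [blockEmbed, Matrix.of_apply, mul_S0T_apply]

lemma P0_mul_P0 {m a s : ℕ} (h : s ≤ a) : (P0 F m a) * P0 F a s = P0 F m s := by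
  ext x j
  rw [P0_mul_apply]
  simp only [P0, Matrix.of_apply]
  have := j.2
  split_ifs <;> first | rfl | omega

lemma S0_mul_S0 {m b s : ℕ} (h : s ≤ b) (hb : b ≤ m) :
    (S0 F m b) * S0 F b s = S0 F m s := by
  ext x j
  rw [S0_mul_apply]
  simp only [S0, Matrix.of_apply]
  have := j.2
  have := x.2
  split_ifs <;> first | rfl | omega

lemma P0T_mul_P0 {m s : ℕ} (h : s ≤ m) : (P0 F m s)ᵀ * P0 F m s = 1 := by
  ext i j
  have h1 : ((P0 F m s)ᵀ * P0 F m s) i j = (P0 F m s) ⟨i, by omega⟩ j := by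
    rw [Matrix.mul_apply, Finset.sum_eq_single (⟨i, by omega⟩ : Fin m)]
    · simp [P0]
    · intro b _ hb
      have : (b : ℕ) ≠ i := fun h => hb (Fin.ext h)
      simp [P0, this]
    · simp
  rw [h1]
  simp [P0, Matrix.one_apply, Fin.ext_iff]

lemma S0T_mul_S0 {m s : ℕ} (h : s ≤ m) : (S0 F m s)ᵀ * S0 F m s = 1 := by
  ext i j
  have h1 : ((S0 F m s)ᵀ * S0 F m s) i j =
      (S0 F m s) ⟨m - s + i, by omega⟩ j := by
    rw [Matrix.mul_apply, Finset.sum_eq_single (⟨m - s + i, by omega⟩ : Fin m)]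
    · simp [S0]
    · intro b _ hb
      have : (b : ℕ) ≠ m - s + i := fun h => hb (Fin.ext h)
      simp [S0, this]
    · simp
  rw [h1]
  simp [S0, Matrix.one_apply, Fin.ext_iff]

lemma S0T_mul_P0 {m s : ℕ} (h : s + s ≤ m) : (S0 F m s)ᵀ * P0 F m s = 0 := by
  ext i j
  rw [Matrix.mul_apply]
  apply Finset.sum_eq_zero
  intro x _
  simp only [S0, P0, Matrix.transpose_apply, Matrix.of_apply]
  have := j.2
  split_ifs <;> first | omega | simp

lemma uU_add {n a b : ℕ} (hab : a + b ≤ n) (X Y : Matrix (Fin a) (Fin b) F) :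
    uU n a b hab (X + Y) = uU n a b hab X * uU n a b hab Y := by
  apply Units.ext
  show 1 + blockEmbed n a b (X + Y) = (1 + blockEmbed n a b X) * (1 + blockEmbed n a b Y)
  have h := blockEmbed_mul_blockEmbed hab X Y
  have e : (1 + blockEmbed n a b X) * (1 + blockEmbed n a b Y)
        = 1 + (blockEmbed n a b X + blockEmbed n a b Y)
          + blockEmbed n a b X * blockEmbed n a b Y := by noncomm_ring
  rw [e, h, add_zero, blockEmbed_eq, blockEmbed_eq, blockEmbed_eq]
  simp [Matrix.mul_add, Matrix.add_mul]

lemma uU_zero {n a b : ℕ} (hab : a + b ≤ n) :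
    uU n a b hab (0 : Matrix (Fin a) (Fin b) F) = 1 := by
  apply Units.ext
  show 1 + blockEmbed n a b 0 = 1
  rw [blockEmbed_eq]; simp

/-- every linear functional on matrices is given by a trace -/
lemma functional_trace {ι κ : Type} [Fintype ι] [DecidableEq ι] [Fintype κ] [DecidableEq κ]
    (ℓ : Matrix ι κ F →ₗ[F] F) : ∃ T : Matrix κ ι F, ∀ X, ℓ X = (X * T).trace := by
  refine ⟨Matrix.of fun j i => ℓ (Matrix.single i j 1), fun X => ?_⟩
  conv_lhs => rw [Matrix.matrix_eq_sum_single X]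
  simp only [map_sum, Matrix.trace, Matrix.diag, Matrix.mul_apply, Matrix.of_apply]
  refine Finset.sum_congr rfl fun i _ => Finset.sum_congr rfl fun j _ => ?_
  have : Matrix.single i j (X i j) = (X i j) • Matrix.single i j (1 : F) := by
    rw [Matrix.smul_single]; simp
  rw [this, map_smul, smul_eq_mul]

lemma claimA (χ₀ : AddChar F ℂ) (hχ₀ : χ₀ ≠ 1) {m k : ℕ}
    (ρ : Representation ℂ (GL (Fin m) F) V)
    (hρ : ∀ T, CharAppears χ₀ ρ (show m / 2 + (m - m / 2) ≤ m by omega) T → T.rank ≤ k)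
    {s : ℕ} (hks : k < s) (hsm : s ≤ m / 2) (v : V) (hv0 : v ≠ 0)
    (hv : ∀ (g : GL (Fin m) F) (C : Matrix (Fin s) (Fin s) F),
      (g : Matrix (Fin m) (Fin m) F) = 1 + P0 F m s * C * (S0 F m s)ᵀ → ρ g v = χ₀ C.trace • v) :
    False := by
  have hab : m / 2 + (m - m / 2) ≤ m := by omega
  set a := m / 2 with ha
  set b := m - m / 2 with hb
  have hsb : s ≤ b := by omega
  let L : Matrix (Fin s) (Fin s) F →ₗ[F] Matrix (Fin a) (Fin b) F :=
    { toFun := fun C => P0 F a s * C * (S0 F b s)ᵀ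
      map_add' := fun x y => by simp [Matrix.mul_add, Matrix.add_mul]
      map_smul' := fun c x => by simp }
  let ℓ' : Matrix (Fin a) (Fin b) F →ₗ[F] F :=
    { toFun := fun X => ((P0 F a s)ᵀ * X * S0 F b s).trace
      map_add' := fun x y => by simp [Matrix.mul_add, Matrix.add_mul]
      map_smul' := fun c x => by simp }
  have hLl : ∀ C, ℓ' (L C) = C.trace := by
    intro C
    show ((P0 F a s)ᵀ * (P0 F a s * C * (S0 F b s)ᵀ) * S0 F b s).trace = C.trace
    have : (P0 F a s)ᵀ * (P0 F a s * C * (S0 F b s)ᵀ) * S0 F b s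
        = ((P0 F a s)ᵀ * P0 F a s) * C * ((S0 F b s)ᵀ * S0 F b s) := by
      simp only [Matrix.mul_assoc]
    rw [this, P0T_mul_P0 hsm, S0T_mul_S0 hsb, Matrix.one_mul, Matrix.mul_one]
  obtain ⟨ℓ, v', hv', hℓ, hℓ', -⟩ := ext_lemma χ₀ hχ₀ (fun X => ρ (uU m a b hab X))
    (fun x y v => by rw [uU_add, map_mul]; rfl) (fun v => by rw [uU_zero, map_one]; rfl)
    v hv0 (LinearMap.range L) ℓ' (by
      rintro _ ⟨C, rfl⟩
      rw [hLl]
      apply hv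
      show 1 + blockEmbed m a b (P0 F a s * C * (S0 F b s)ᵀ) = _
      rw [blockEmbed_eq]
      have : P0 F m a * (P0 F a s * C * (S0 F b s)ᵀ) * (S0 F m b)ᵀ
          = (P0 F m a * P0 F a s) * C * (S0 F m b * S0 F b s)ᵀ := by
        rw [Matrix.transpose_mul]
        simp only [Matrix.mul_assoc]
      rw [this, P0_mul_P0 hsm, S0_mul_S0 hsb (by omega)]) 0
  obtain ⟨T, hT⟩ := functional_trace ℓ
  have h1 : T.rank ≤ k := by
    apply hρ
    refine ⟨v', hv', fun X => ?_⟩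
    rw [hℓ, hT, Matrix.trace_mul_comm]
  have h2 : (S0 F b s)ᵀ * T * P0 F a s = 1 := by
    rw [Matrix.ext_iff_trace_mul_left]
    intro C
    have h3 := hℓ' (L C) ⟨C, rfl⟩
    rw [hLl, hT] at h3
    rw [Matrix.mul_one, ← h3]
    show _ = (P0 F a s * C * (S0 F b s)ᵀ * T).trace
    rw [Matrix.mul_assoc (P0 F a s * C), Matrix.mul_assoc (P0 F a s),
      Matrix.trace_mul_comm (P0 F a s), ← Matrix.mul_assoc C]
  have h3 : s ≤ T.rank := by
    calc s = (1 : Matrix (Fin s) (Fin s) F).rank := by simp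
      _ = ((S0 F b s)ᵀ * T * P0 F a s).rank := by rw [h2]
      _ ≤ ((S0 F b s)ᵀ * T).rank := Matrix.rank_mul_le_left _ _
      _ ≤ T.rank := Matrix.rank_mul_le_right _ _
  omega

/-- the pair `(P,S)` has jointly independent columns -/
def Ind2 {m : ℕ} {ι : Type} [Fintype ι] (P S : Matrix (Fin m) ι F) : Prop :=
  ∀ a b, P *ᵥ a + S *ᵥ b = 0 → a = 0 ∧ b = 0

/-- `v` is an eigenvector of the unipotent group attached to `P`, with character given by `S` -/
def inE {m : ℕ} {ι : Type} [Fintype ι] (χ₀ : AddChar F ℂ) (ρ : Representation ℂ (GL (Fin m) F) V)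
    (P S : Matrix (Fin m) ι F) (v : V) : Prop :=
  ∀ (g : GL (Fin m) F) (Y : Matrix ι (Fin m) F), Y * P = 0 →
    (g : Matrix (Fin m) (Fin m) F) = 1 + P * Y → ρ g v = χ₀ (Y * S).trace • v

lemma inE_conj {m : ℕ} {ι : Type} [Fintype ι] (χ₀ : AddChar F ℂ)
    (ρ : Representation ℂ (GL (Fin m) F) V)
    (P S : Matrix (Fin m) ι F) (v : V) (h : inE χ₀ ρ P S v) (g₀ : GL (Fin m) F) :
    inE χ₀ ρ ((g₀ : Matrix (Fin m) (Fin m) F) * P) ((g₀ : Matrix (Fin m) (Fin m) F) * S)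
      (ρ g₀ v) := by
  intro g Y hY hg
  have h1 := h (g₀⁻¹ * g * g₀) (Y * (g₀ : Matrix (Fin m) (Fin m) F))
    (by rw [Matrix.mul_assoc, hY]) (by
      rw [Units.val_mul, Units.val_mul, hg, Matrix.mul_add, Matrix.mul_one, Matrix.add_mul,
        Units.inv_mul]
      congr 1
      rw [← Matrix.mul_assoc, ← Matrix.mul_assoc, Units.inv_mul, Matrix.one_mul, Matrix.mul_assoc])
  have h2 : ρ g (ρ g₀ v) = ρ g₀ (ρ (g₀⁻¹ * g * g₀) v) := by
    rw [← Module.End.mul_apply, ← Module.End.mul_apply, ← map_mul, ← map_mul]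
    congr 2; group
  rw [h2, h1, map_smul, Matrix.mul_assoc]

/-- The unipotent element `1 + P * Y` -/
def unip {m : ℕ} {ι : Type} [Fintype ι] (P : Matrix (Fin m) ι F) (Y : Matrix ι (Fin m) F)
    (h : Y * P = 0) : GL (Fin m) F where
  val := 1 + P * Y
  inv := 1 - P * Y
  val_inv := by
    have h2 : P * Y * (P * Y) = 0 := by
      rw [Matrix.mul_assoc, ← Matrix.mul_assoc Y, h, Matrix.zero_mul, Matrix.mul_zero]
    have e : (1 + P * Y) * (1 - P * Y) = 1 - P * Y * (P * Y) := by noncomm_ring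
    rw [e, h2, sub_zero]
  inv_val := by
    have h2 : P * Y * (P * Y) = 0 := by
      rw [Matrix.mul_assoc, ← Matrix.mul_assoc Y, h, Matrix.zero_mul, Matrix.mul_zero]
    have e : (1 - P * Y) * (1 + P * Y) = 1 - P * Y * (P * Y) := by noncomm_ring
    rw [e, h2, sub_zero]

lemma mem_range_of_kill {m : ℕ} {ι : Type} [Fintype ι] [DecidableEq ι] (A : Matrix (Fin m) ι F)
    (u : Fin m → F) (h : ∀ y : Fin m → F, y ᵥ* A = 0 → y ⬝ᵥ u = 0) : ∃ a, A *ᵥ a = u := by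
  by_contra hne
  have hu : u ∉ LinearMap.range A.mulVecLin := by
    rintro ⟨a, ha⟩
    exact hne ⟨a, ha⟩
  obtain ⟨f, hf, hf'⟩ := Submodule.exists_dual_map_eq_bot_of_notMem hu inferInstance
  have hfd : ∀ w : Fin m → F, f w = (fun i => f (Pi.single i 1)) ⬝ᵥ w := by
    intro w
    rw [LinearMap.pi_apply_eq_sum_univ f w]
    simp only [dotProduct, smul_eq_mul]
    refine Finset.sum_congr rfl fun i _ => ?_
    rw [mul_comm]
    congr 2
    ext j
    simp [Pi.single_apply, eq_comm]
  apply hf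
  rw [hfd]
  apply h
  ext j
  have h1 : f (A *ᵥ Pi.single j 1) ∈ Submodule.map f (LinearMap.range A.mulVecLin) :=
    ⟨_, ⟨_, rfl⟩, rfl⟩
  rw [hf', Submodule.mem_bot, hfd, Matrix.dotProduct_mulVec] at h1
  simpa using h1

lemma claimB (χ₀ : AddChar F ℂ) (hχ₀ : χ₀ ≠ 1) {m : ℕ} {ι : Type} [Fintype ι] [DecidableEq ι]
    (ρ : Representation ℂ (GL (Fin m) F) V)
    (P S : Matrix (Fin m) ι F) (v : V) (hv0 : v ≠ 0) (hE : inE χ₀ ρ P S v)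
    (x y : Fin m → F) (hyx : y ⬝ᵥ x = 0) (hyP : y ᵥ* P = 0) (hyS : y ᵥ* S = 0)
    (hind : ∀ a b (c : F), P *ᵥ a + S *ᵥ b + c • x = 0 → a = 0 ∧ b = 0 ∧ c = 0)
    (hno : ∀ (P' S' : Matrix (Fin m) (Option ι) F), Ind2 P' S' →
      ∀ v, inE χ₀ ρ P' S' v → v = 0) :
    ρ (tv x y hyx) v = v := by
  by_contra hne
  let P' : Matrix (Fin m) (Option ι) F := Matrix.of fun r o => o.elim (x r) (P r)
  have hP'Y : ∀ Y : Matrix (Option ι) (Fin m) F,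
      P' * Y = vecMulVec x (Y none) + P * Y.submatrix some id := by
    intro Y
    ext i j
    simp [Matrix.mul_apply, Fintype.sum_option, P', vecMulVec_apply]
  have hP'a : ∀ a : Option ι → F, P' *ᵥ a = a none • x + P *ᵥ (fun i => a (some i)) := by
    intro a
    ext i
    simp [Matrix.mulVec, dotProduct, Fintype.sum_option, P', mul_comm]
  have hyP' : ∀ w : Fin m → F, w ⬝ᵥ x = 0 → w ᵥ* P = 0 → w ᵥ* P' = 0 := by
    intro w h1 h2
    ext o
    cases o with
    | none => exact h1
    | some i => exact congrFun h2 i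
  let B : Submodule F (Matrix (Option ι) (Fin m) F) :=
    { carrier := {Y | Y * P' = 0}
      add_mem' := fun {a b} ha hb => by
        simp only [Set.mem_ofPred_eq] at ha hb ⊢
        rw [Matrix.add_mul, ha, hb, add_zero]
      zero_mem' := by simp
      smul_mem' := fun c a ha => by
        simp only [Set.mem_ofPred_eq] at ha ⊢
        rw [Matrix.smul_mul, ha, smul_zero] }
  let σ : B → V →ₗ[ℂ] V := fun Y => ρ (unip P' Y.1 Y.2)
  let B' : Submodule F B :=
    { carrier := {Y | ∀ j, Y.1 none j = 0}
      add_mem' := fun {a b} ha hb j => by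
        show a.1 none j + b.1 none j = 0
        rw [ha, hb, add_zero]
      zero_mem' := fun j => rfl
      smul_mem' := fun c a ha j => by
        show c * a.1 none j = 0
        rw [ha, mul_zero] }
  let ℓ' : B →ₗ[F] F :=
    { toFun := fun Y => (Y.1.submatrix some id * S).trace
      map_add' := fun Y Z => by
        rw [Submodule.coe_add, Matrix.submatrix_add, Pi.add_apply, Pi.add_apply, Matrix.add_mul,
          Matrix.trace_add]
      map_smul' := fun c Y => by
        rw [Submodule.coe_smul, Matrix.submatrix_smul, Pi.smul_apply, Pi.smul_apply,
          Matrix.smul_mul, Matrix.trace_smul, RingHom.id_apply] }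
  let row : Option ι → (Fin m → F) → Matrix (Option ι) (Fin m) F :=
    fun o w => vecMulVec (Pi.single o 1) w
  have hrow : ∀ o w, w ᵥ* P' = 0 → row o w * P' = 0 := by
    intro o w h
    show vecMulVec _ _ * P' = 0
    rw [vecMulVec_mul, h, vecMulVec_zero]
  have hrowtr : ∀ o w (S' : Matrix (Fin m) (Option ι) F),
      (row o w * S').trace = (w ᵥ* S') o := by
    intro o w S'
    show (vecMulVec (Pi.single o 1 : Option ι → F) w * S').trace = _
    rw [vecMulVec_mul, trace_vecMulVec]
    simp
  have hyP'0 := hyP' y hyx hyP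
  let b0 : B := ⟨row none y, hrow none y hyP'0⟩
  obtain ⟨ℓ, v', hv', hℓ, hℓ', hb0⟩ := ext_lemma χ₀ hχ₀ σ
    (fun Y Z v => by
      show ρ _ v = ρ _ (ρ _ v)
      rw [← Module.End.mul_apply, ← map_mul]
      congr 2
      apply Units.ext
      show 1 + P' * (Y.1 + Z.1) = (1 + P' * Y.1) * (1 + P' * Z.1)
      have h2 : P' * Y.1 * (P' * Z.1) = 0 := by
        rw [Matrix.mul_assoc, ← Matrix.mul_assoc Y.1, Y.2, Matrix.zero_mul, Matrix.mul_zero]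
      have e : (1 + P' * Y.1) * (1 + P' * Z.1) = 1 + (P' * Y.1 + P' * Z.1)
        + P' * Y.1 * (P' * Z.1) := by noncomm_ring
      rw [e, h2, add_zero, Matrix.mul_add])
    (fun v => by
      show ρ _ v = v
      have : unip P' (0 : B).1 (0 : B).2 = 1 := by
        apply Units.ext
        show 1 + P' * (0 : Matrix (Option ι) (Fin m) F) = 1
        rw [Matrix.mul_zero, add_zero]
      rw [this, map_one]; rfl)
    v hv0 B' ℓ'
    (fun Y hY => by
      apply hE
      · ext i j
        exact congrFun (congrFun Y.2 (some i)) (some j)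
      · show 1 + P' * Y.1 = _
        rw [hP'Y]
        have : Y.1 none = 0 := funext hY
        rw [this, vecMulVec_zero, zero_add]) b0
  have hb0' : ℓ b0 ≠ 0 := by
    apply hb0
    have : unip P' b0.1 b0.2 = tv x y hyx := by
      apply Units.ext
      show 1 + P' * row none y = 1 + vecMulVec x y
      rw [hP'Y]
      have h1 : row none y none = y := by
        ext j; simp [row, vecMulVec_apply]
      have h2 : (row none y).submatrix some id = 0 := by
        ext i j; simp [row, vecMulVec_apply]
      rw [h1, h2, Matrix.mul_zero, add_zero]
    show ρ _ v ≠ v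
    rw [this]
    exact hne
  obtain ⟨L, hL⟩ := LinearMap.exists_extend ℓ
  obtain ⟨S', hS'⟩ := functional_trace L
  have hLS : ∀ Y : B, ℓ Y = (Y.1 * S').trace := by
    intro Y
    rw [← hS', ← hL]; rfl
  have hnone : (y ᵥ* S') none ≠ 0 := by
    rw [hLS] at hb0'
    rwa [← hrowtr]
  have hsome : ∀ w, w ᵥ* P' = 0 → ∀ i, (w ᵥ* S') (some i) = (w ᵥ* S) i := by
    intro w hw i
    have h1 := hℓ' ⟨row (some i) w, hrow _ _ hw⟩ (fun j => by simp [row, vecMulVec_apply])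
    rw [hLS, hrowtr] at h1
    rw [h1]
    show ((row (some i) w).submatrix some id * S).trace = _
    have h2 : (row (some i) w).submatrix some id = vecMulVec (Pi.single i 1) w := by
      ext a b; simp [row, vecMulVec_apply, Pi.single_apply]
    rw [h2, vecMulVec_mul, trace_vecMulVec]
    simp
  have hkey : ∀ w, w ᵥ* P' = 0 → ∀ a b, P' *ᵥ a + S' *ᵥ b = 0 →
      (w ᵥ* S') none * b none + w ⬝ᵥ (S *ᵥ (fun i => b (some i))) = 0 := by
    intro w hw a b hab
    have h1 : w ⬝ᵥ (P' *ᵥ a + S' *ᵥ b) = 0 := by rw [hab]; simp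
    rw [dotProduct_add, dotProduct_mulVec, hw, zero_dotProduct, zero_add, dotProduct_mulVec] at h1
    rw [dotProduct_mulVec]
    simp only [dotProduct, Fintype.sum_option] at h1 ⊢
    rw [← h1]
    congr 1
    exact Finset.sum_congr rfl fun i _ => by rw [hsome w hw]
  have hInd : Ind2 P' S' := by
    intro a b hab
    have hbn : b none = 0 := by
      have h1 := hkey y hyP'0 a b hab
      rw [dotProduct_mulVec, hyS, zero_dotProduct, add_zero] at h1
      exact (mul_eq_zero.1 h1).resolve_left hnone
    obtain ⟨a', ha'⟩ := mem_range_of_kill P' (S *ᵥ (fun i => b (some i))) (fun w hw => by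
      have h1 := hkey w hw a b hab
      rwa [hbn, mul_zero, zero_add] at h1)
    have hbs : (fun i => b (some i)) = 0 := by
      rw [hP'a] at ha'
      refine (hind (fun i => - a' (some i)) (fun i => b (some i)) (- a' none) ?_).2.1
      rw [← ha']
      have : (fun i => - a' (some i)) = - (fun i => a' (some i)) := rfl
      rw [this, mulVec_neg, neg_smul]
      abel
    have hb : b = 0 := by
      ext o
      cases o with
      | none => exact hbn
      | some i => exact congrFun hbs i
    refine ⟨?_, hb⟩
    rw [hb, mulVec_zero, add_zero, hP'a] at hab
    have h2 := hind (fun i => a (some i)) 0 (a none) (by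
      rw [mulVec_zero, add_zero, add_comm]; exact hab)
    ext o
    cases o with
    | none => exact h2.2.2
    | some i => exact congrFun h2.1 i
  exact hv' (hno P' S' hInd v' (fun g Y hY hg => by
    rw [← hLS ⟨Y, hY⟩, ← hℓ ⟨Y, hY⟩]
    congr 2
    apply Units.ext
    exact hg))

lemma claimB2 (χ₀ : AddChar F ℂ) (hχ₀ : χ₀ ≠ 1) {m : ℕ} {ι : Type} [Fintype ι] [DecidableEq ι]
    (ρ : Representation ℂ (GL (Fin m) F) V)
    (P S : Matrix (Fin m) ι F) (v : V) (hv0 : v ≠ 0) (hE : inE χ₀ ρ P S v)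
    (hPS : Ind2 P S) (hm : 2 * Fintype.card ι + 1 < m)
    (x y : Fin m → F) (hyx : y ⬝ᵥ x = 0) (hyP : y ᵥ* P = 0) (hyS : y ᵥ* S = 0)
    (hno : ∀ (P' S' : Matrix (Fin m) (Option ι) F), Ind2 P' S' →
      ∀ v, inE χ₀ ρ P' S' v → v = 0) :
    ρ (tv x y hyx) v = v := by
  have key : ∀ (x : Fin m → F) (hyx : y ⬝ᵥ x = 0), (¬ ∃ a b, P *ᵥ a + S *ᵥ b = x) →
      ρ (tv x y hyx) v = v := by
    intro x hyx hx
    apply claimB χ₀ hχ₀ ρ P S v hv0 hE x y hyx hyP hyS _ hno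
    intro a b c habc
    by_cases hc : c = 0
    · subst hc
      rw [zero_smul, add_zero] at habc
      exact ⟨(hPS a b habc).1, (hPS a b habc).2, rfl⟩
    · exfalso
      apply hx
      refine ⟨(-c⁻¹) • a, (-c⁻¹) • b, ?_⟩
      rw [mulVec_smul, mulVec_smul, ← smul_add, eq_neg_of_add_eq_zero_left habc, smul_neg,
        smul_smul]
      simp [hc]
  by_cases hx : ∃ a b, P *ᵥ a + S *ᵥ b = x
  · obtain ⟨a, b, hab⟩ := hx
    have hex : ∃ x', y ⬝ᵥ x' = 0 ∧ ¬ ∃ a b, P *ᵥ a + S *ᵥ b = x' := by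
      by_contra hcon
      push Not at hcon
      let f : (Fin m → F) →ₗ[F] F :=
        { toFun := fun u => y ⬝ᵥ u
          map_add' := fun u w => dotProduct_add _ _ _
          map_smul' := fun c u => by rw [dotProduct_smul]; rfl }
      have hle : LinearMap.ker f ≤ LinearMap.range (Matrix.fromCols P S).mulVecLin := by
        intro u hu
        obtain ⟨a, b, hab⟩ := hcon u hu
        refine ⟨Sum.elim a b, ?_⟩
        rw [Matrix.mulVecLin_apply, Matrix.fromCols_mulVec]
        simpa using hab
      have h1 := Submodule.finrank_mono hle
      have h2 := LinearMap.finrank_range_le (Matrix.fromCols P S).mulVecLin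
      have h3 := LinearMap.finrank_range_add_finrank_ker f
      have h4 := Submodule.finrank_le (LinearMap.range f)
      simp only [Module.finrank_fintype_fun_eq_card, Fintype.card_fin, Fintype.card_sum,
        Module.finrank_self] at h2 h3 h4
      omega
    obtain ⟨x', hyx', hx'⟩ := hex
    have e : tv x y hyx = tv (x + x') y (by rw [dotProduct_add, hyx, hyx', add_zero]) *
        tv (-x') y (by rw [dotProduct_neg, hyx', neg_zero]) := by
      apply Units.ext
      apply mat_ext_mulVec
      intro u
      rw [Units.val_mul, ← mulVec_mulVec, tv_mulVec, tv_mulVec, tv_mulVec, dotProduct_add,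
        dotProduct_smul, dotProduct_neg, hyx']
      simp
      abel
    rw [e, map_mul, Module.End.mul_apply, key (-x'), key (x + x')]
    · rintro ⟨a', b', h'⟩
      apply hx'
      refine ⟨a' - a, b' - b, ?_⟩
      rw [mulVec_sub, mulVec_sub, sub_add_sub_comm, h', hab]
      simp
    · rintro ⟨a', b', h'⟩
      apply hx'
      refine ⟨-a', -b', ?_⟩
      rw [mulVec_neg, mulVec_neg, ← neg_add, h', neg_neg]
  · exact key x hyx hx

lemma inE_reindex (χ₀ : AddChar F ℂ) {m : ℕ} {ι κ : Type} [Fintype ι] [DecidableEq ι]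
    [Fintype κ] [DecidableEq κ] (e : κ ≃ ι) (ρ : Representation ℂ (GL (Fin m) F) V)
    (P S : Matrix (Fin m) ι F) (v : V) (hE : inE χ₀ ρ P S v) :
    inE χ₀ ρ (P.submatrix id e) (S.submatrix id e) v := by
  intro g Y hY hg
  have h1 := hE g (Y.submatrix e.symm id) (by
      ext i j
      have := congrFun (congrFun hY (e.symm i)) (e.symm j)
      simpa [Matrix.mul_apply] using this) (by
      rw [hg]
      congr 1
      ext i j
      simp only [Matrix.mul_apply, Matrix.submatrix_apply, id]
      apply Fintype.sum_equiv e
      simp)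
  rw [h1]
  congr 2
  simp only [Matrix.trace, Matrix.diag, Matrix.mul_apply, Matrix.submatrix_apply, id]
  symm
  apply Fintype.sum_equiv e
  simp

lemma Ind2_reindex {m : ℕ} {ι κ : Type} [Fintype ι] [DecidableEq ι]
    [Fintype κ] [DecidableEq κ] (e : κ ≃ ι)
    (P S : Matrix (Fin m) ι F) (h : Ind2 P S) :
    Ind2 (P.submatrix id e) (S.submatrix id e) := by
  intro a b hab
  have h1 := h (a ∘ e.symm) (b ∘ e.symm) (by
    rw [← hab]
    congr 1
    · ext i
      simp only [mulVec, dotProduct, Matrix.submatrix_apply, id, Function.comp]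
      symm; apply Fintype.sum_equiv e; simp
    · ext i
      simp only [mulVec, dotProduct, Matrix.submatrix_apply, id, Function.comp]
      symm; apply Fintype.sum_equiv e; simp)
  constructor
  · ext i; simpa using congrFun h1.1 (e i)
  · ext i; simpa using congrFun h1.2 (e i)

/-- conjugation of a pair to another pair -/
lemma pair_conj {m : ℕ} {ι : Type} [Fintype ι] [DecidableEq ι]
    (P S P' S' : Matrix (Fin m) ι F) (h : Ind2 P S) (h' : Ind2 P' S') :
    ∃ g : GL (Fin m) F, (g : Matrix (Fin m) (Fin m) F) * P = P' ∧
      (g : Matrix (Fin m) (Fin m) F) * S = S' := by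
  have aux : ∀ P S : Matrix (Fin m) ι F, Ind2 P S → ∀ a, Matrix.fromCols P S *ᵥ a = 0 → a = 0 := by
    intro P S h a ha
    rw [Matrix.fromCols_mulVec] at ha
    have := h _ _ ha
    ext s
    cases s with
    | inl i => exact congrFun this.1 i
    | inr i => exact congrFun this.2 i
  obtain ⟨g, hg⟩ := inj_lemma _ _ (aux P S h) (aux P' S' h')
  rw [Matrix.mul_fromCols, Matrix.fromCols_ext_iff] at hg
  exact ⟨g, hg⟩

lemma Ind2_P0S0 {m s : ℕ} (h : s + s ≤ m) : Ind2 (P0 F m s) (S0 F m s) := by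
  intro a b hab
  constructor
  · ext i
    have := congrFun hab ⟨i, by omega⟩
    rw [Pi.add_apply, P0_mulVec, S0_mulVec, dif_pos (by simp), dif_neg] at this
    · simpa using this
    · simp; omega
  · ext i
    have := congrFun hab ⟨m - s + i, by omega⟩
    rw [Pi.add_apply, P0_mulVec, S0_mulVec, dif_neg (by simp; omega), dif_pos (by simp)] at this
    simpa using this

/-- second auxiliary block -/
def S1 (F : Type) [Field F] (m s : ℕ) : Matrix (Fin m) (Fin s) F :=
  Matrix.of fun x j => if (x : ℕ) = s + j then 1 else 0

lemma S1_mulVec {m s : ℕ} (a : Fin s → F) (x : Fin m) :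
    (S1 F m s *ᵥ a) x = if h : s ≤ (x : ℕ) ∧ (x : ℕ) - s < s then
      a ⟨x - s, h.2⟩ else 0 := by
  simp only [S1, Matrix.mulVec, dotProduct, Matrix.of_apply, ite_mul, one_mul, zero_mul]
  split_ifs with h
  · rw [Finset.sum_eq_single ⟨x - s, h.2⟩]
    · rw [if_pos]
      show (x : ℕ) = s + (x - s)
      omega
    · intro b _ hb
      rw [if_neg]
      intro h'
      apply hb
      apply Fin.ext
      show (b : ℕ) = x - s
      omega
    · simp
  · apply Finset.sum_eq_zero
    intro j _
    rw [if_neg]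
    have := j.2
    omega

lemma Ind2_P0S1 {m s : ℕ} (h : s + s ≤ m) : Ind2 (P0 F m s) (S1 F m s) := by
  intro a b hab
  constructor
  · ext i
    have := congrFun hab ⟨i, by omega⟩
    rw [Pi.add_apply, P0_mulVec, S1_mulVec, dif_pos (by simp), dif_neg] at this
    · simpa using this
    · simp
  · ext i
    have := congrFun hab ⟨s + i, by omega⟩
    rw [Pi.add_apply, P0_mulVec, S1_mulVec, dif_neg (by simp), dif_pos (by simp)] at this
    simpa using this

lemma vecMul_P0_zero {m s : ℕ} (y : Fin m → F) (hy : ∀ j : Fin m, (j : ℕ) < s → y j = 0) :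
    y ᵥ* P0 F m s = 0 := by
  ext j
  simp only [vecMul, dotProduct]
  apply Finset.sum_eq_zero
  intro x _
  show y x * (if (x : ℕ) = j then 1 else 0) = 0
  split_ifs with h
  · rw [hy x (by have := j.2; omega), zero_mul]
  · rw [mul_zero]

lemma vecMul_S1_zero {m s : ℕ} (y : Fin m → F) (hy : ∀ j : Fin m, (j : ℕ) < s + s → y j = 0) :
    y ᵥ* S1 F m s = 0 := by
  ext j
  simp only [vecMul, dotProduct]
  apply Finset.sum_eq_zero
  intro x _
  show y x * (if (x : ℕ) = s + j then 1 else 0) = 0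
  split_ifs with h
  · rw [hy x (by have := j.2; omega), zero_mul]
  · rw [mul_zero]

lemma dl_mul_fix {m s : ℕ} (z : Fin m) (a : Fˣ) (A : Matrix (Fin m) (Fin s) F)
    (hA : ∀ j, A z j = 0) : (dl z a : Matrix (Fin m) (Fin m) F) * A = A := by
  ext i j
  show (diagonal (Pi.mulSingle z (a : F)) * A) i j = A i j
  rw [Matrix.diagonal_mul]
  by_cases h : i = z
  · subst h; rw [hA]; simp
  · simp [Pi.mulSingle_eq_of_ne h]

lemma dl_mul {m : ℕ} (z : Fin m) (a b : Fˣ) : dl z (a * b) = dl z a * dl z b := by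
  apply Units.ext
  show diagonal (Pi.mulSingle z ((a * b : Fˣ) : F)) =
    diagonal (Pi.mulSingle z (a : F)) * diagonal (Pi.mulSingle z (b : F))
  rw [diagonal_mul_diagonal]
  congr 1
  ext i
  by_cases h : i = z
  · subst h; simp
  · simp [Pi.mulSingle_eq_of_ne h]

lemma dl_one {m : ℕ} (z : Fin m) : dl z (1 : Fˣ) = 1 := by
  apply Units.ext
  show diagonal (Pi.mulSingle z ((1 : Fˣ) : F)) = 1
  simp

lemma detHom_dl {m : ℕ} (z : Fin m) (a : Fˣ) : detHom m (dl z a) = a := by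
  apply Units.ext
  show (diagonal (Pi.mulSingle z (a : F))).det = a
  rw [det_diagonal, Finset.prod_eq_single z]
  · simp
  · intro b _ hb
    simp [Pi.mulSingle_eq_of_ne hb]
  · simp

lemma det_one_add_vecMulVec {m : ℕ} (x y : Fin m → F) :
    (1 + vecMulVec x y).det = 1 + y ⬝ᵥ x := by
  rw [← det_one_add_replicateCol_mul_replicateRow (ι := Unit)]
  congr 2
  exact vecMulVec_eq Unit x y

lemma detHom_tv {m : ℕ} (x y : Fin m → F) (h : y ⬝ᵥ x = 0) : detHom m (tv x y h) = 1 := by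
  apply Units.ext
  show (1 + vecMulVec x y).det = 1
  rw [det_one_add_vecMulVec, h, add_zero]

lemma step2 (χ₀ : AddChar F ℂ) (hχ₀ : χ₀ ≠ 1) {m k : ℕ} [FiniteDimensional ℂ V]
    (ρ : Representation ℂ (GL (Fin m) F) V)
    (hρ : ∀ T, CharAppears χ₀ ρ (show m / 2 + (m - m / 2) ≤ m by omega) T → T.rank ≤ k)
    (hV : ∃ v : V, v ≠ 0) (hm : 2 * k + 4 ≤ m) :
    ∃ t, t ≤ 2 * k ∧ ∃ α : Fˣ →* ℂˣ, ∃ v : V, v ≠ 0 ∧ ∀ h : GL (Fin m) F,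
      (∀ j : Fin m, (j : ℕ) < t → (h : Matrix (Fin m) (Fin m) F) *ᵥ Pi.single j 1 = Pi.single j 1) →
        twistRep α ρ h v = v := by
  let Pr : ℕ → Prop := fun i => ∃ P S : Matrix (Fin m) (Fin i) F, Ind2 P S ∧
    ∃ v : V, v ≠ 0 ∧ inE χ₀ ρ P S v
  have h0 : Pr 0 := by
    obtain ⟨v, hv⟩ := hV
    refine ⟨0, 0, fun a b _ => ⟨Subsingleton.elim _ _, Subsingleton.elim _ _⟩, v, hv, ?_⟩
    intro g Y _ hg
    have : g = 1 := by
      apply Units.ext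
      rw [hg, Matrix.zero_mul, add_zero]; rfl
    rw [this, map_one]
    simp
  have hk : ¬ Pr (k + 1) := by
    rintro ⟨P, S, hPS, v, hv, hE⟩
    obtain ⟨g, hgP, hgS⟩ := pair_conj P S (P0 F m (k+1)) (S0 F m (k+1)) hPS
      (Ind2_P0S0 (by omega))
    have hE' := inE_conj χ₀ ρ P S v hE g
    rw [hgP, hgS] at hE'
    refine claimA χ₀ hχ₀ ρ hρ (Nat.lt_succ_self k) (by omega) (ρ g v) ?_ ?_
    · intro h
      apply hv
      have : ρ g⁻¹ (ρ g v) = v := by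
        rw [← Module.End.mul_apply, ← map_mul]; simp
      rw [← this, h, map_zero]
    · intro g C hg
      rw [hE' g (C * (S0 F m (k+1))ᵀ)]
      · rw [Matrix.mul_assoc, S0T_mul_S0 (by omega), Matrix.mul_one]
      · rw [Matrix.mul_assoc, S0T_mul_P0 (by omega), Matrix.mul_zero]
      · rw [hg, Matrix.mul_assoc]
  have hex : ∃ i, i ≤ k ∧ Pr i ∧ ¬ Pr (i + 1) := by
    by_contra hcon
    push Not at hcon
    have : ∀ i, i ≤ k + 1 → Pr i := by
      intro i
      induction i with
      | zero => intro _; exact h0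
      | succ i ih => intro hi; exact hcon i (by omega) (ih (by omega))
    exact hk (this _ le_rfl)
  obtain ⟨i, hik, ⟨P, S, hPS, v, hv, hE⟩, hi⟩ := hex
  have hno : ∀ (P' S' : Matrix (Fin m) (Option (Fin i)) F), Ind2 P' S' →
      ∀ v, inE χ₀ ρ P' S' v → v = 0 := by
    intro P' S' hI v hv
    by_contra hv0
    let e : Fin (i + 1) ≃ Option (Fin i) := finSuccEquiv i
    exact hi ⟨_, _, Ind2_reindex e P' S' hI, v, hv0, inE_reindex χ₀ e ρ P' S' v hv⟩
  have hI1 : Ind2 (P0 F m i) (S1 F m i) := Ind2_P0S1 (by omega)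
  obtain ⟨g, hgP, hgS⟩ := pair_conj P S _ _ hPS hI1
  have hE1 := inE_conj χ₀ ρ P S v hE g
  rw [hgP, hgS] at hE1
  have hv1 : ρ g v ≠ 0 := by
    intro h
    apply hv
    have : ρ g⁻¹ (ρ g v) = v := by
      rw [← Module.End.mul_apply, ← map_mul]; simp
    rw [← this, h, map_zero]
  let E : Submodule ℂ V :=
    { carrier := {v | inE χ₀ ρ (P0 F m i) (S1 F m i) v}
      add_mem' := fun {a b} ha hb g Y h1 h2 => by
        rw [map_add, ha g Y h1 h2, hb g Y h1 h2, smul_add]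
      zero_mem' := fun g Y h1 h2 => by rw [map_zero, smul_zero]
      smul_mem' := fun c a ha g Y h1 h2 => by
        rw [map_smul, ha g Y h1 h2, smul_comm] }
  let z : Fin m := ⟨m - 1, by omega⟩
  have hdlE : ∀ a : Fˣ, ∀ u ∈ E, ρ (dl z a) u ∈ E := by
    intro a u hu
    have h1 := inE_conj χ₀ ρ _ _ u hu (dl z a)
    rw [dl_mul_fix, dl_mul_fix] at h1
    · exact h1
    · intro j
      have := j.2
      simp only [S1, Matrix.of_apply, z]
      rw [if_neg (by omega)]
    · intro j
      have := j.2
      simp only [P0, Matrix.of_apply, z]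
      rw [if_neg (by omega)]
  obtain ⟨a0, ha0⟩ := IsCyclic.exists_monoid_generator (α := Fˣ)
  have hnt : Nontrivial E := ⟨⟨⟨ρ g v, hE1⟩, 0, fun h => hv1 (congrArg Subtype.val h)⟩⟩
  obtain ⟨μ, hμ⟩ := Module.End.exists_eigenvalue (LinearMap.restrict (ρ (dl z a0)) (hdlE a0))
  obtain ⟨w, hw⟩ := hμ.exists_hasEigenvector
  have hw0 : (w : V) ≠ 0 := fun h => hw.2 (Subtype.ext h)
  have hwμ : ρ (dl z a0) (w : V) = μ • (w : V) := congrArg Subtype.val hw.apply_eq_smul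
  have hall : ∀ a : Fˣ, ∃ c : ℂ, ρ (dl z a) (w : V) = c • (w : V) := by
    intro a
    obtain ⟨n, rfl⟩ := ha0 a
    induction n with
    | zero => exact ⟨1, by simp [dl_one]⟩
    | succ n ih =>
      obtain ⟨c, hc⟩ := ih
      refine ⟨μ * c, ?_⟩
      simp only at hc ⊢
      rw [pow_succ, dl_mul, map_mul, Module.End.mul_apply, hwμ, map_smul, hc, smul_smul]
  choose c hc using hall
  have hinj : ∀ a b : ℂ, a • (w : V) = b • (w : V) → a = b := fun a b h =>
    smul_left_injective ℂ hw0 h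
  let ch : Fˣ →* ℂ :=
    { toFun := c
      map_one' := hinj _ _ (by rw [← hc, dl_one, map_one, one_smul]; rfl)
      map_mul' := fun a b => hinj _ _ (by
        rw [← hc, dl_mul, map_mul, Module.End.mul_apply, hc b, map_smul, hc a, smul_smul,
          mul_comm]) }
  let α : Fˣ →* ℂˣ := (MonoidHom.toHomUnits ch)⁻¹
  have hα : ∀ a, ((α a : ℂˣ) : ℂ) * c a = 1 := by
    intro a
    have : c a = ((MonoidHom.toHomUnits ch a : ℂˣ) : ℂ) := rfl
    rw [this]
    show (((MonoidHom.toHomUnits ch a)⁻¹ : ℂˣ) : ℂ) * _ = 1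
    exact Units.inv_mul _
  refine ⟨2 * i, by omega, α, w, hw0, ?_⟩
  let Γ : Subgroup (GL (Fin m) F) :=
    { carrier := {h | twistRep α ρ h (w : V) = w}
      one_mem' := by
        show twistRep α ρ 1 (w : V) = w
        rw [map_one]; rfl
      mul_mem' := fun {a b} ha hb => by
        show twistRep α ρ (a * b) (w : V) = w
        rw [map_mul, Module.End.mul_apply, hb, ha]
      inv_mem' := fun {a} ha => by
        show twistRep α ρ a⁻¹ (w : V) = w
        conv_lhs => rw [← (show twistRep α ρ a (w : V) = w from ha)]
        rw [← Module.End.mul_apply, ← map_mul, inv_mul_cancel, map_one]; rfl }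
  have hgen := gen_lemma Γ z (by simp only [z]; omega)
    (fun a => by
      show ((α (detHom m (dl z a)) : ℂˣ) : ℂ) • ρ (dl z a) (w : V) = w
      rw [detHom_dl, hc, smul_smul, hα, one_smul]) (m - 1 - 2 * i) (2 * i) (by omega)
    (fun x y h hy => by
      show ((α (detHom m (tv x y h)) : ℂˣ) : ℂ) • ρ (tv x y h) (w : V) = w
      rw [detHom_tv, map_one, Units.val_one, one_smul]
      exact claimB2 χ₀ hχ₀ ρ _ _ w hw0 w.2 hI1 (by rw [Fintype.card_fin]; omega) x y h
        (vecMul_P0_zero y (fun j hj => hy j (by omega)))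
        (vecMul_S1_zero y (fun j hj => hy j (by omega))) hno)
  exact fun h hh => hgen h hh

lemma P0_single {m t : ℕ} (j : Fin m) (hj : (j : ℕ) < t) :
    P0 F m t *ᵥ Pi.single ⟨j, hj⟩ 1 = Pi.single j 1 := by
  ext x
  rw [P0_mulVec]
  by_cases h : x = j
  · subst h; simp [hj]
  · have : (x : ℕ) ≠ j := fun h' => h (Fin.ext h')
    split_ifs <;> simp [Pi.single_apply, h, Fin.ext_iff, this]

lemma rep_inv_apply {G : Type} [Group G] (ρ : Representation ℂ G V) (g : G) (v : V) :
    ρ g⁻¹ (ρ g v) = v := by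
  rw [← Module.End.mul_apply, ← map_mul]; simp

lemma occurs_of_fixed {m t : ℕ} (ρ : Representation ℂ (GL (Fin m) F) V)
    (v : V) (hv : v ≠ 0)
    (hfix : ∀ h : GL (Fin m) F,
      (∀ j : Fin m, (j : ℕ) < t → (h : Matrix (Fin m) (Fin m) F) *ᵥ Pi.single j 1 = Pi.single j 1) →
        ρ h v = v) : Occurs ρ (permRep m t) := by
  obtain ⟨l, hl⟩ : ∃ l : Module.Dual ℂ V, l v ≠ 0 := by
    by_contra hcon
    push Not at hcon
    exact hv ((Module.forall_dual_apply_eq_zero_iff ℂ v).1 hcon)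
  let T0 := P0 F m t
  let φ : V →ₗ[ℂ] (Matrix (Fin m) (Fin t) F → ℂ) :=
    { toFun := fun u T => ∑ g : GL (Fin m) F,
        if (g : Matrix (Fin m) (Fin m) F) * T0 = T then l (ρ g⁻¹ u) else 0
      map_add' := fun u w => by
        ext T
        simp only [map_add, Pi.add_apply, ← Finset.sum_add_distrib]
        refine Finset.sum_congr rfl fun g _ => ?_
        split_ifs <;> simp
      map_smul' := fun c u => by
        ext T
        simp only [map_smul, Pi.smul_apply, RingHom.id_apply, Finset.smul_sum]
        refine Finset.sum_congr rfl fun g _ => ?_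
        split_ifs <;> simp }
  refine ⟨φ, ?_, ?_⟩
  · intro h
    have h1 : φ v T0 = 0 := by rw [h]; rfl
    have h2 : φ v T0 = ∑ g : GL (Fin m) F,
        if (g : Matrix (Fin m) (Fin m) F) * T0 = T0 then l v else 0 := by
      refine Finset.sum_congr rfl fun g _ => ?_
      split_ifs with hg
      · congr 1
        have : ρ g v = v := by
          apply hfix
          intro j hj
          rw [← P0_single j hj, mulVec_mulVec, hg]
        conv_lhs => rw [← this]
        exact rep_inv_apply ρ g v
      · rfl
    rw [h1, ← Finset.sum_filter, Finset.sum_const] at h2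
    have h3 := h2.symm
    rw [nsmul_eq_mul, mul_eq_zero] at h3
    rcases h3 with h3 | h3
    · rw [Nat.cast_eq_zero, Finset.card_eq_zero] at h3
      have : (1 : GL (Fin m) F) ∈ (∅ : Finset (GL (Fin m) F)) := by
        rw [← h3]; simp
      simp at this
    · exact hl h3
  · intro x
    ext u T
    show (∑ g : GL (Fin m) F,
        if (g : Matrix (Fin m) (Fin m) F) * T0 = T then l (ρ g⁻¹ (ρ x u)) else 0) =
      ∑ g : GL (Fin m) F,
        if (g : Matrix (Fin m) (Fin m) F) * T0 = ((x⁻¹ : GL (Fin m) F) : Matrix (Fin m) (Fin m) F) * T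
          then l (ρ g⁻¹ u) else 0
    apply Fintype.sum_equiv (Equiv.mulLeft x⁻¹)
    intro g
    have e1 : (((Equiv.mulLeft x⁻¹) g : GL (Fin m) F) : Matrix (Fin m) (Fin m) F) * T0 =
      ((x⁻¹ : GL (Fin m) F) : Matrix (Fin m) (Fin m) F) * ((g : Matrix (Fin m) (Fin m) F) * T0) := by
      rw [← Matrix.mul_assoc]; rfl
    have e2 : ((g : Matrix (Fin m) (Fin m) F) * T0 = T) ↔
      ((((Equiv.mulLeft x⁻¹) g : GL (Fin m) F) : Matrix (Fin m) (Fin m) F) * T0 =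
        ((x⁻¹ : GL (Fin m) F) : Matrix (Fin m) (Fin m) F) * T) := by
      rw [e1]
      constructor
      · intro h; rw [h]
      · intro h
        have := congrArg (fun A => (x : Matrix (Fin m) (Fin m) F) * A) h
        simpa only [← Matrix.mul_assoc, Units.mul_inv, Matrix.one_mul] using this
    have e3 : ρ ((Equiv.mulLeft x⁻¹) g)⁻¹ u = ρ g⁻¹ (ρ x u) := by
      rw [← Module.End.mul_apply, ← map_mul]
      congr 2
    rw [e3]
    exact if_congr e2 rfl rfl

lemma ker_zero {m r : ℕ} (ρ : Representation ℂ (GL (Fin m) F) V)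
    (hmin : ¬ Occurs ρ (permRep m r))
    (φ : V →ₗ[ℂ] (Matrix (Fin m) (Fin (r + 1)) F → ℂ))
    (hφ : ∀ g u T, φ (ρ g u) T = φ u (((g⁻¹ : GL (Fin m) F) : Matrix (Fin m) (Fin m) F) * T))
    (u : V) (T : Matrix (Fin m) (Fin (r + 1)) F) (z : Fin (r + 1) → F) (hz : z ≠ 0)
    (hT : T *ᵥ z = 0) : φ u T = 0 := by
  obtain ⟨j, hj⟩ := Function.ne_iff.1 hz
  have hj : z j ≠ 0 := hj
  let A : Matrix (Fin (r + 1)) (Fin (r + 1)) F := 1 - (z j)⁻¹ • vecMulVec z (Pi.single j 1)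
  have hTA : T * A = T := by
    show T * (1 - (z j)⁻¹ • vecMulVec z (Pi.single j 1)) = T
    rw [Matrix.mul_sub, Matrix.mul_one, Matrix.mul_smul, mul_vecMulVec, hT, zero_vecMulVec,
      smul_zero, sub_zero]
  have hAj : ∀ l, A j l = 0 := by
    intro l
    by_cases h : l = j
    · subst h; simp [A, vecMulVec_apply, hj]
    · simp [A, vecMulVec_apply, h, Matrix.one_apply_ne (Ne.symm h)]
  let A' : Matrix (Fin r) (Fin (r + 1)) F := A.submatrix j.succAbove id
  have hT' : T.submatrix id j.succAbove * A' = T := by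
    conv_rhs => rw [← hTA]
    ext a b
    rw [Matrix.mul_apply, Matrix.mul_apply, Fin.sum_univ_succAbove _ j, hAj, mul_zero, zero_add]
    rfl
  let ψ : V →ₗ[ℂ] (Matrix (Fin m) (Fin r) F → ℂ) :=
    { toFun := fun u T' => φ u (T' * A')
      map_add' := fun u w => by ext T; simp
      map_smul' := fun c u => by ext T; simp }
  have hψ : ψ = 0 := by
    by_contra hne
    refine hmin ⟨ψ, hne, fun g => ?_⟩
    ext u T
    show φ (ρ g u) (T * A') = φ u (_ * T * A')
    rw [hφ, Matrix.mul_assoc]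
  have : ψ u (T.submatrix id j.succAbove) = 0 := by rw [hψ]; rfl
  rw [← hT']
  exact this

lemma sum_zero {m s : ℕ} (ρ : Representation ℂ (GL (Fin m) F) V)
    (hker : ∀ φ : V →ₗ[ℂ] (Matrix (Fin m) (Fin s) F → ℂ),
      (∀ g u T, φ (ρ g u) T = φ u (((g⁻¹ : GL (Fin m) F) : Matrix (Fin m) (Fin m) F) * T)) →
      ∀ u T z, z ≠ 0 → T *ᵥ z = 0 → φ u T = 0)
    (φ : V →ₗ[ℂ] (Matrix (Fin m) (Fin s) F → ℂ))
    (hφ : ∀ g u T, φ (ρ g u) T = φ u (((g⁻¹ : GL (Fin m) F) : Matrix (Fin m) (Fin m) F) * T))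
    (u : V) (T : Matrix (Fin m) (Fin s) F) (z : Fin s → F) (hz : z ≠ 0) :
    ∑ w : Fin m → F, φ u (T + vecMulVec w z) = 0 := by
  obtain ⟨j, hj⟩ := Function.ne_iff.1 hz
  have hj : z j ≠ 0 := hj
  let ψ : V →ₗ[ℂ] (Matrix (Fin m) (Fin s) F → ℂ) :=
    { toFun := fun u T => ∑ w : Fin m → F, φ u (T + vecMulVec w z)
      map_add' := fun u w => by ext T; simp [Finset.sum_add_distrib]
      map_smul' := fun c u => by ext T; simp [Finset.mul_sum] }
  have hψ : ∀ g u T, ψ (ρ g u) T = ψ u (((g⁻¹ : GL (Fin m) F) : Matrix (Fin m) (Fin m) F) * T) := by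
    intro g u T
    show ∑ w : Fin m → F, φ (ρ g u) (T + vecMulVec w z) = ∑ w : Fin m → F, φ u (_ + vecMulVec w z)
    let e : (Fin m → F) ≃ (Fin m → F) :=
      { toFun := fun w => ((g⁻¹ : GL (Fin m) F) : Matrix (Fin m) (Fin m) F) *ᵥ w
        invFun := fun w => (g : Matrix (Fin m) (Fin m) F) *ᵥ w
        left_inv := fun w => by
          show _ *ᵥ (_ *ᵥ w) = w
          rw [mulVec_mulVec, Units.mul_inv, one_mulVec]
        right_inv := fun w => by
          show _ *ᵥ (_ *ᵥ w) = w
          rw [mulVec_mulVec, Units.inv_mul, one_mulVec] }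
    apply Fintype.sum_equiv e
    intro w
    rw [hφ, Matrix.mul_add, mul_vecMulVec]
    rfl
  let c : Fin m → F := fun i => - (z j)⁻¹ * T i j
  have h1 : ψ u T = ψ u (T + vecMulVec c z) := by
    show ∑ w : Fin m → F, φ u (T + vecMulVec w z) = ∑ w : Fin m → F, φ u (_ + vecMulVec w z)
    symm
    apply Fintype.sum_equiv (Equiv.addLeft c)
    intro w
    rw [add_assoc, ← add_vecMulVec]
    rfl
  show ψ u T = 0
  rw [h1]
  apply hker ψ hψ u _ (Pi.single j 1)
  · intro h
    have := congrFun h j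
    simp at this
  · ext i
    simp [vecMulVec_apply, c, mul_comm (T i j), hj]
    field_simp
    simp

lemma det_unip {m : ℕ} {ι : Type} [Fintype ι] [DecidableEq ι] (P : Matrix (Fin m) ι F)
    (Y : Matrix ι (Fin m) F) (h : Y * P = 0) : detHom m (unip P Y h) = 1 := by
  apply Units.ext
  show (1 + P * Y).det = 1
  rw [det_one_add_mul_comm, h, add_zero, det_one]

lemma twist_of_det_one {m : ℕ} (α : Fˣ →* ℂˣ) (ρ : Representation ℂ (GL (Fin m) F) V)
    (g : GL (Fin m) F) (h : detHom m g = 1) (v : V) : twistRep α ρ g v = ρ g v := by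
  show ((α (detHom m g) : ℂˣ) : ℂ) • ρ g v = ρ g v
  rw [h, map_one, Units.val_one, one_smul]

lemma vecMul_S0_zero {m s : ℕ} (y : Fin m → F) (hy : ∀ j : Fin m, m - s ≤ (j : ℕ) → y j = 0) :
    y ᵥ* S0 F m s = 0 := by
  ext j
  simp only [vecMul, dotProduct]
  apply Finset.sum_eq_zero
  intro x _
  show y x * (if (x : ℕ) = m - s + j then 1 else 0) = 0
  split_ifs with h
  · rw [hy x (by omega), zero_mul]
  · rw [mul_zero]

/-- the transvection moving `S0 - P0 C` -/
lemma move_lemma {m s : ℕ} (hsm : s + s ≤ m) (C : Matrix (Fin s) (Fin s) F) (r : Fin s)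
    (w : Fin m → F) (x : Fin m) (hx1 : s ≤ (x : ℕ)) (hx2 : (x : ℕ) < m - s) (hwx : w x ≠ 0) :
    ∃ h : GL (Fin m) F, (h : Matrix (Fin m) (Fin m) F) * S0 F m s = S0 F m s ∧
      (h : Matrix (Fin m) (Fin m) F) * (S0 F m s - P0 F m s * C) =
        (S0 F m s - P0 F m s * C) + vecMulVec w (C r) := by
  let r' : Fin m := ⟨r, by omega⟩
  let y : Fin m → F := (w r' / w x) • Pi.single x 1 - Pi.single r' 1
  have hyw : y ⬝ᵥ w = 0 := by
    simp only [y, sub_dotProduct, smul_dotProduct, single_dotProduct, one_mul, smul_eq_mul]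
    field_simp
    simp
  have hyS : y ᵥ* S0 F m s = 0 := by
    apply vecMul_S0_zero
    intro j hj
    have h1 : j ≠ x := by rintro rfl; omega
    have h2 : j ≠ r' := by
      rintro rfl
      have : ((r' : Fin m) : ℕ) = r := rfl
      omega
    simp [y, h1, h2]
  have hyP : y ᵥ* P0 F m s = - Pi.single r 1 := by
    ext j
    simp only [y, sub_vecMul, smul_vecMul, single_one_vecMul, Pi.sub_apply, Pi.smul_apply,
      Matrix.row_apply, Pi.neg_apply, smul_eq_mul, Pi.single_apply]
    simp only [P0, Matrix.of_apply, r']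
    rw [if_neg (by omega), mul_zero, zero_sub]
    by_cases h : j = r
    · subst h; simp
    · have : (r : ℕ) ≠ j := fun h' => h (Fin.ext h'.symm)
      simp [h, this]
  have hyT : y ᵥ* (S0 F m s - P0 F m s * C) = C r := by
    rw [vecMul_sub, hyS, ← vecMul_vecMul, hyP, neg_vecMul, zero_sub, neg_neg, single_one_vecMul]
    rfl
  refine ⟨tv w y hyw, ?_, ?_⟩
  · show (1 + vecMulVec w y) * S0 F m s = _
    rw [Matrix.add_mul, Matrix.one_mul, vecMulVec_mul, hyS]
    ext i j
    simp [vecMulVec_apply]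
  · show (1 + vecMulVec w y) * (S0 F m s - P0 F m s * C) = _
    rw [Matrix.add_mul, Matrix.one_mul, vecMulVec_mul, hyT]

/-- vectors vanishing on the middle indices -/
def midZero (F : Type) [Field F] [Fintype F] [DecidableEq F] (m s : ℕ) : Finset (Fin m → F) :=
  Finset.univ.filter fun w => ∀ x : Fin m, s ≤ (x : ℕ) → (x : ℕ) < m - s → w x = 0

lemma card_midZero {m s : ℕ} (hsm : s + s ≤ m) :
    (midZero F m s).card ≤ Fintype.card F ^ (s + s) := by
  have h1 : Fintype.card F ^ (s + s) = Fintype.card ((Fin s → F) × (Fin s → F)) := by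
    rw [Fintype.card_prod, Fintype.card_fun, Fintype.card_fin, pow_add]
  rw [h1, ← Finset.card_univ]
  apply Finset.card_le_card_of_injOn
    (fun w => (fun i => w ⟨i, by omega⟩, fun i => w ⟨m - s + i, by omega⟩))
  · intro w _
    simp
  · intro w hw w' hw' h
    have hw : ∀ x : Fin m, s ≤ (x : ℕ) → (x : ℕ) < m - s → w x = 0 := by
      simpa [midZero] using hw
    have hw' : ∀ x : Fin m, s ≤ (x : ℕ) → (x : ℕ) < m - s → w' x = 0 := by
      simpa [midZero] using hw'
    rw [Prod.ext_iff] at h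
    ext x
    by_cases hx : (x : ℕ) < s
    · exact congrFun h.1 ⟨x, hx⟩
    · by_cases hx2 : (x : ℕ) < m - s
      · rw [hw x (by omega) hx2, hw' x (by omega) hx2]
      · have h3 := congrFun h.2 ⟨x - (m - s), by omega⟩
        have h4 : (⟨m - s + (x - (m - s)), by omega⟩ : Fin m) = x :=
          Fin.ext (by show m - s + (x - (m - s)) = (x : ℕ); omega)
        simp only [h4] at h3
        exact h3

lemma bound_lemma {m s : ℕ} (hsm : s + s ≤ m) (f : Matrix (Fin m) (Fin s) F → ℂ)
    (hf : ∀ h : GL (Fin m) F, (h : Matrix (Fin m) (Fin m) F) * S0 F m s = S0 F m s →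
      ∀ T, f ((h : Matrix (Fin m) (Fin m) F) * T) = f T)
    (M : ℝ) (hM : ∀ T, ‖f T‖ ≤ M)
    (hsum : ∀ T z, z ≠ 0 → ∑ w : Fin m → F, f (T + vecMulVec w z) = 0)
    (C : Matrix (Fin s) (Fin s) F) (hC : C ≠ 0) :
    (Fintype.card F : ℝ) ^ m * ‖f (S0 F m s - P0 F m s * C)‖ ≤
      (Fintype.card F : ℝ) ^ (s + s) * (2 * M) := by
  obtain ⟨r, hr⟩ : ∃ r, C r ≠ 0 := by
    by_contra hcon
    push Not at hcon
    exact hC (by ext i j; exact congrFun (hcon i) j)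
  set T := S0 F m s - P0 F m s * C with hT
  have h1 : ∑ w : Fin m → F, (f T - f (T + vecMulVec w (C r))) =
      (Fintype.card F : ℂ) ^ m * f T := by
    rw [Finset.sum_sub_distrib, hsum T _ hr, sub_zero, Finset.sum_const, Finset.card_univ,
      Fintype.card_fun, Fintype.card_fin, nsmul_eq_mul]
    push_cast
    rfl
  have h2 : ∑ w : Fin m → F, (f T - f (T + vecMulVec w (C r))) =
      ∑ w ∈ midZero F m s, (f T - f (T + vecMulVec w (C r))) := by
    symm
    apply Finset.sum_subset (Finset.subset_univ _)
    intro w _ hw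
    have : ∃ x : Fin m, s ≤ (x : ℕ) ∧ (x : ℕ) < m - s ∧ w x ≠ 0 := by
      by_contra hcon
      push Not at hcon
      exact hw (by simpa [midZero] using hcon)
    obtain ⟨x, hx1, hx2, hwx⟩ := this
    obtain ⟨h, hh1, hh2⟩ := move_lemma hsm C r w x hx1 hx2 hwx
    rw [← hT] at hh2
    rw [← hh2, hf h hh1, sub_self]
  have h3 : ‖(Fintype.card F : ℂ) ^ m * f T‖ ≤ ∑ w ∈ midZero F m s, (2 * M) := by
    rw [← h1, h2]
    apply norm_sum_le_of_le
    intro w _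
    calc _ ≤ ‖f T‖ + ‖f (T + vecMulVec w (C r))‖ := norm_sub_le _ _
      _ ≤ M + M := add_le_add (hM _) (hM _)
      _ = 2 * M := by ring
  have hM0 : 0 ≤ M := le_trans (norm_nonneg _) (hM 0)
  rw [norm_mul, norm_pow, Complex.norm_natCast, Finset.sum_const, nsmul_eq_mul] at h3
  refine h3.trans ?_
  apply mul_le_mul_of_nonneg_right _ (by positivity)
  exact_mod_cast card_midZero (F := F) hsm

lemma step3 (χ₀ : AddChar F ℂ) (hχ₀ : χ₀ ≠ 1) {m k s : ℕ}
    (ρ : Representation ℂ (GL (Fin m) F) V)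
    (hρ : ∀ T, CharAppears χ₀ ρ (show m / 2 + (m - m / 2) ≤ m by omega) T → T.rank ≤ k)
    (hks : k < s) (hm : s * s + 2 * s + 2 ≤ m) (α : Fˣ →* ℂˣ)
    (hker : ∀ φ : V →ₗ[ℂ] (Matrix (Fin m) (Fin s) F → ℂ),
      (∀ g u T, φ (twistRep α ρ g u) T =
        φ u (((g⁻¹ : GL (Fin m) F) : Matrix (Fin m) (Fin m) F) * T)) →
      ∀ u T z, z ≠ 0 → T *ᵥ z = 0 → φ u T = 0)
    (hocc : Occurs (twistRep α ρ) (permRep m s)) : False := by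
  obtain ⟨φ, hφ0, hφc⟩ := hocc
  have hφ : ∀ g u T, φ (twistRep α ρ g u) T =
      φ u (((g⁻¹ : GL (Fin m) F) : Matrix (Fin m) (Fin m) F) * T) := by
    intro g u T
    exact congrFun (LinearMap.congr_fun (hφc g) u) T
  obtain ⟨u, hu⟩ : ∃ u, φ u ≠ 0 := by
    by_contra hcon
    push Not at hcon
    exact hφ0 (LinearMap.ext hcon)
  obtain ⟨T2, hT2⟩ := Function.ne_iff.1 hu
  obtain ⟨T1, -, hT1⟩ := Finset.exists_max_image Finset.univ (fun T => ‖φ u T‖)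
    ⟨0, Finset.mem_univ _⟩
  have hT1max : ∀ T, ‖φ u T‖ ≤ ‖φ u T1‖ := fun T => hT1 T (Finset.mem_univ _)
  have hT1ne : φ u T1 ≠ 0 := by
    intro h
    have := hT1max T2
    rw [h, norm_zero] at this
    exact hT2 (norm_le_zero_iff.1 this)
  have hsm : s + s ≤ m := by nlinarith
  have hS0inj : ∀ a, S0 F m s *ᵥ a = 0 → a = 0 := by
    intro a ha
    exact (Ind2_P0S0 (F := F) hsm 0 a (by rw [mulVec_zero, zero_add, ha])).2
  obtain ⟨g, hg⟩ := inj_lemma T1 (S0 F m s) (fun a ha => by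
    by_contra hne
    exact hT1ne (hker φ hφ u T1 a hne ha)) hS0inj
  let u1 := twistRep α ρ g u
  have hu1S : φ u1 (S0 F m s) = φ u T1 := by
    show φ (twistRep α ρ g u) _ = _
    rw [hφ, ← hg, ← Matrix.mul_assoc, Units.inv_mul, Matrix.one_mul]
  have hu1max : ∀ T, ‖φ u1 T‖ ≤ ‖φ u1 (S0 F m s)‖ := by
    intro T
    rw [hu1S]
    show ‖φ (twistRep α ρ g u) _‖ ≤ _
    rw [hφ]
    exact hT1max _
  let H : Subgroup (GL (Fin m) F) :=
    { carrier := {h | (h : Matrix (Fin m) (Fin m) F) * S0 F m s = S0 F m s}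
      one_mem' := by
        show ((1 : GL (Fin m) F) : Matrix (Fin m) (Fin m) F) * S0 F m s = S0 F m s
        rw [Units.val_one, Matrix.one_mul]
      mul_mem' := fun {a b} ha hb => by
        show ((a * b : GL (Fin m) F) : Matrix (Fin m) (Fin m) F) * S0 F m s = S0 F m s
        rw [Units.val_mul, Matrix.mul_assoc, hb, ha]
      inv_mem' := fun {a} ha => by
        show ((a⁻¹ : GL (Fin m) F) : Matrix (Fin m) (Fin m) F) * S0 F m s = S0 F m s
        have ha : (a : Matrix (Fin m) (Fin m) F) * S0 F m s = S0 F m s := ha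
        conv_lhs => rw [← ha]
        rw [← Matrix.mul_assoc, Units.inv_mul, Matrix.one_mul] }
  have : Fintype H := Fintype.ofFinite H
  let u' : V := ∑ h : H, twistRep α ρ (h : GL (Fin m) F) u1
  let f := φ u'
  have hfT : ∀ T, f T = ∑ h : H,
      φ u1 ((((h : GL (Fin m) F)⁻¹ : GL (Fin m) F) : Matrix (Fin m) (Fin m) F) * T) := by
    intro T
    show φ (∑ h : H, twistRep α ρ (h : GL (Fin m) F) u1) T = _
    rw [map_sum, Finset.sum_apply]
    exact Finset.sum_congr rfl fun h _ => hφ _ _ _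
  have hfH : ∀ h : GL (Fin m) F, (h : Matrix (Fin m) (Fin m) F) * S0 F m s = S0 F m s →
      ∀ T, f ((h : Matrix (Fin m) (Fin m) F) * T) = f T := by
    intro h hh T
    rw [hfT, hfT]
    let h' : H := ⟨h, hh⟩
    apply Fintype.sum_equiv (Equiv.mulLeft h'⁻¹)
    intro x
    rw [← Matrix.mul_assoc, ← Units.val_mul]
    have e : (x : GL (Fin m) F)⁻¹ * h = ((Equiv.mulLeft h'⁻¹ x : H) : GL (Fin m) F)⁻¹ := by
      show (x : GL (Fin m) F)⁻¹ * h = (h⁻¹ * (x : GL (Fin m) F))⁻¹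
      group
    rw [e]
  have hfS : f (S0 F m s) = (Fintype.card H : ℂ) * φ u1 (S0 F m s) := by
    rw [hfT, ← nsmul_eq_mul, ← Finset.card_univ, ← Finset.sum_const]
    refine Finset.sum_congr rfl fun h _ => ?_
    exact congrArg (φ u1) (h⁻¹ : H).2
  have hfS0 : f (S0 F m s) ≠ 0 := by
    rw [hfS, hu1S]
    refine mul_ne_zero ?_ hT1ne
    exact_mod_cast Fintype.card_ne_zero
  have hfmax : ∀ T, ‖f T‖ ≤ ‖f (S0 F m s)‖ := by
    intro T
    rw [hfS, norm_mul, Complex.norm_natCast, hfT]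
    calc _ ≤ ∑ h : H, ‖φ u1 (S0 F m s)‖ := norm_sum_le_of_le _ (fun h _ => hu1max _)
      _ = _ := by rw [Finset.sum_const, nsmul_eq_mul, Finset.card_univ]
  have hsumf : ∀ T z, z ≠ 0 → ∑ w : Fin m → F, f (T + vecMulVec w z) = 0 :=
    fun T z hz => sum_zero (twistRep α ρ) hker φ hφ u' T z hz
  -- the eigenvector attached to the unipotent group
  have hCP : ∀ C : Matrix (Fin s) (Fin s) F, C * (S0 F m s)ᵀ * P0 F m s = 0 := by
    intro C
    rw [Matrix.mul_assoc, S0T_mul_P0 hsm, Matrix.mul_zero]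
  let uC : Matrix (Fin s) (Fin s) F → GL (Fin m) F :=
    fun C => unip (P0 F m s) (C * (S0 F m s)ᵀ) (hCP C)
  have huCadd : ∀ C D, uC (C + D) = uC C * uC D := by
    intro C D
    apply Units.ext
    show 1 + P0 F m s * ((C + D) * (S0 F m s)ᵀ) = (1 + P0 F m s * (C * (S0 F m s)ᵀ)) *
      (1 + P0 F m s * (D * (S0 F m s)ᵀ))
    have h2 : P0 F m s * (C * (S0 F m s)ᵀ) * (P0 F m s * (D * (S0 F m s)ᵀ)) = 0 := by
      rw [Matrix.mul_assoc, ← Matrix.mul_assoc (C * (S0 F m s)ᵀ), hCP, Matrix.zero_mul,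
        Matrix.mul_zero]
    rw [Matrix.add_mul C, Matrix.mul_add (P0 F m s), Matrix.mul_add (1 + _), Matrix.add_mul 1,
      Matrix.add_mul 1, h2]
    simp [add_assoc]
  let w : V := ∑ C : Matrix (Fin s) (Fin s) F, χ₀ (-C.trace) • ρ (uC C) u'
  have hw : w = 0 := by
    by_contra hw0
    refine claimA χ₀ hχ₀ ρ hρ hks (by omega) w hw0 ?_
    intro g D hg
    have hgD : g = uC D := by
      apply Units.ext
      rw [hg, Matrix.mul_assoc]; rfl
    show ρ g (∑ C : Matrix (Fin s) (Fin s) F, χ₀ (-C.trace) • ρ (uC C) u') =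
      χ₀ D.trace • ∑ C : Matrix (Fin s) (Fin s) F, χ₀ (-C.trace) • ρ (uC C) u'
    rw [map_sum, Finset.smul_sum]
    apply Fintype.sum_equiv (Equiv.addLeft D)
    intro C
    rw [map_smul, ← Module.End.mul_apply, ← map_mul, hgD, ← huCadd, smul_smul]
    show _ = (χ₀ D.trace * χ₀ (-(D + C).trace)) • ρ (uC (D + C)) u'
    rw [← AddChar.map_add_eq_mul, Matrix.trace_add]
    congr 2
    ring
  have hsumC : ∑ C : Matrix (Fin s) (Fin s) F, χ₀ (-C.trace) * f (S0 F m s - P0 F m s * C) = 0 := by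
    have h1 : φ w (S0 F m s) = 0 := by rw [hw, map_zero]; rfl
    rw [← h1]
    show _ = φ (∑ C : Matrix (Fin s) (Fin s) F, χ₀ (-C.trace) • ρ (uC C) u') _
    rw [map_sum, Finset.sum_apply]
    refine Finset.sum_congr rfl fun C _ => ?_
    rw [map_smul, Pi.smul_apply, smul_eq_mul,
      ← twist_of_det_one α ρ (uC C) (det_unip _ _ _), hφ]
    congr 2
    show _ = (1 - P0 F m s * (C * (S0 F m s)ᵀ)) * S0 F m s
    rw [Matrix.sub_mul, Matrix.one_mul, Matrix.mul_assoc, Matrix.mul_assoc, S0T_mul_S0 (by omega),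
      Matrix.mul_one]
  have hM0 : 0 < ‖f (S0 F m s)‖ := norm_pos_iff.2 hfS0
  set M := ‖f (S0 F m s)‖ with hMdef
  have hb := bound_lemma hsm f hfH M hfmax hsumf
  rw [← Finset.sum_erase_add _ _ (Finset.mem_univ (0 : Matrix (Fin s) (Fin s) F))] at hsumC
  simp only [Matrix.trace_zero, neg_zero, AddChar.map_zero_eq_one, one_mul, Matrix.mul_zero,
    sub_zero] at hsumC
  have hfin : M ≤ ∑ C ∈ (Finset.univ : Finset (Matrix (Fin s) (Fin s) F)).erase 0,
      ‖f (S0 F m s - P0 F m s * C)‖ := by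
    rw [hMdef, eq_neg_of_add_eq_zero_right hsumC, norm_neg]
    apply norm_sum_le_of_le
    intro C _
    rw [norm_mul, AddChar.norm_apply, one_mul]
  set q : ℝ := (Fintype.card F : ℝ) with hq
  have hq2 : 2 ≤ q := by
    rw [hq]
    exact_mod_cast Fintype.one_lt_card
  have hbig : q ^ m * M ≤ q ^ (s * s) * (q ^ (s + s) * (2 * M)) := by
    calc q ^ m * M ≤ q ^ m * ∑ C ∈ (Finset.univ : Finset (Matrix (Fin s) (Fin s) F)).erase 0,
          ‖f (S0 F m s - P0 F m s * C)‖ := by gcongr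
      _ = ∑ C ∈ (Finset.univ : Finset (Matrix (Fin s) (Fin s) F)).erase 0,
          q ^ m * ‖f (S0 F m s - P0 F m s * C)‖ := by rw [Finset.mul_sum]
      _ ≤ ∑ C ∈ (Finset.univ : Finset (Matrix (Fin s) (Fin s) F)).erase 0,
          (q ^ (s + s) * (2 * M)) :=
        Finset.sum_le_sum fun C hC => hb C (Finset.ne_of_mem_erase hC)
      _ ≤ ∑ C : Matrix (Fin s) (Fin s) F, (q ^ (s + s) * (2 * M)) := by
        apply Finset.sum_le_sum_of_subset_of_nonneg (Finset.erase_subset _ _)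
        intro _ _ _
        positivity
      _ = q ^ (s * s) * (q ^ (s + s) * (2 * M)) := by
        rw [Finset.sum_const, nsmul_eq_mul, Finset.card_univ]
        congr 1
        have : Fintype.card (Matrix (Fin s) (Fin s) F) = Fintype.card F ^ (s * s) := by
          rw [pow_mul]
          show Fintype.card (Fin s → Fin s → F) = _
          rw [Fintype.card_fun, Fintype.card_fun, Fintype.card_fin]
        rw [this, hq]
        push_cast
        rfl
  have hlt : q ^ (s * s) * (q ^ (s + s) * (2 * M)) < q ^ m * M := by
    have h1 : q ^ (s * s) * (q ^ (s + s) * (2 * M)) = q ^ (s * s + (s + s)) * 2 * M := by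
      rw [pow_add]; ring
    rw [h1]
    apply mul_lt_mul_of_pos_right _ hM0
    calc q ^ (s * s + (s + s)) * 2 ≤ q ^ (s * s + (s + s)) * q := by gcongr
      _ = q ^ (s * s + (s + s) + 1) := by rw [pow_succ]
      _ < q ^ m := pow_lt_pow_right₀ (by linarith) (by omega)
  linarith

lemma glEmbed_val {n m : ℕ} (h : n ≤ m) (g : GL (Fin n) F) :
    ((glEmbed h g : GL (Fin m) F) : Matrix (Fin m) (Fin m) F) =
      (Matrix.fromBlocks (g : Matrix (Fin n) (Fin n) F) 0 0 (1 : Matrix (Fin (m - n)) (Fin (m - n)) F)).submatrix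
        ((finSumFinEquiv (m := n) (n := m - n)).trans (finCongr (by omega))).symm
        ((finSumFinEquiv (m := n) (n := m - n)).trans (finCongr (by omega))).symm := rfl

lemma detHom_glEmbed {n m : ℕ} (h : n ≤ m) (g : GL (Fin n) F) :
    detHom m (glEmbed h g) = detHom n g := by
  apply Units.ext
  show ((glEmbed h g : GL (Fin m) F) : Matrix (Fin m) (Fin m) F).det =
    (g : Matrix (Fin n) (Fin n) F).det
  rw [glEmbed_val, Matrix.det_submatrix_equiv_self, Matrix.det_fromBlocks_zero₂₁, det_one, mul_one]

lemma glEmbed_mul_apply {n m s : ℕ} (h : n ≤ m) (g : GL (Fin n) F) (A : Matrix (Fin m) (Fin s) F)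
    (p : Fin n ⊕ Fin (m - n)) (j : Fin s) :
    (((glEmbed h g : GL (Fin m) F) : Matrix (Fin m) (Fin m) F) * A)
      (((finSumFinEquiv (m := n) (n := m - n)).trans (finCongr (by omega))) p) j =
    (Matrix.fromBlocks (g : Matrix (Fin n) (Fin n) F) 0 0 (1 : Matrix (Fin (m - n)) (Fin (m - n)) F) *
      A.submatrix ((finSumFinEquiv (m := n) (n := m - n)).trans (finCongr (by omega))) id) p j := by
  rw [glEmbed_val, Matrix.mul_apply, Matrix.mul_apply]
  symm
  apply Fintype.sum_equiv ((finSumFinEquiv (m := n) (n := m - n)).trans (finCongr (by omega)))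
  intro x
  simp only [Matrix.submatrix_apply, Equiv.symm_apply_apply, id]

lemma glEmbed_mul_lt {n m s : ℕ} (h : n ≤ m) (g : GL (Fin n) F) (A : Matrix (Fin m) (Fin s) F)
    (i : Fin m) (hi : (i : ℕ) < n) (j : Fin s) :
    (((glEmbed h g : GL (Fin m) F) : Matrix (Fin m) (Fin m) F) * A) i j =
      ((g : Matrix (Fin n) (Fin n) F) * A.submatrix (Fin.castLE h) id) ⟨i, hi⟩ j := by
  have h1 := glEmbed_mul_apply h g A (Sum.inl ⟨i, hi⟩) j
  have h2 : ((finSumFinEquiv (m := n) (n := m - n)).trans (finCongr (by omega)))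
      (Sum.inl ⟨i, hi⟩) = i := by
    ext; simp
  rw [h2] at h1
  rw [h1, Matrix.mul_apply, Fintype.sum_sum_type, Matrix.mul_apply]
  simp only [Matrix.fromBlocks_apply₁₁, Matrix.fromBlocks_apply₁₂, Matrix.zero_apply, zero_mul,
    Finset.sum_const_zero, add_zero]
  rfl

lemma glEmbed_mul_ge {n m s : ℕ} (h : n ≤ m) (g : GL (Fin n) F) (A : Matrix (Fin m) (Fin s) F)
    (i : Fin m) (hi : n ≤ (i : ℕ)) (j : Fin s) :
    (((glEmbed h g : GL (Fin m) F) : Matrix (Fin m) (Fin m) F) * A) i j = A i j := by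
  have h1 := glEmbed_mul_apply h g A (Sum.inr ⟨i - n, by omega⟩) j
  have h2 : ((finSumFinEquiv (m := n) (n := m - n)).trans (finCongr (by omega)))
      (Sum.inr ⟨i - n, by omega⟩) = i := by
    ext; simp; omega
  rw [h2] at h1
  rw [h1, Matrix.mul_apply, Fintype.sum_sum_type]
  simp only [Matrix.fromBlocks_apply₂₁, Matrix.fromBlocks_apply₂₂, Matrix.zero_apply, zero_mul,
    Finset.sum_const_zero, zero_add]
  rw [Finset.sum_eq_single ⟨i - n, by omega⟩]
  · rw [Matrix.one_apply_eq, one_mul]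
    simp only [Matrix.submatrix_apply, h2, id]
  · intro b _ hb
    rw [Matrix.one_apply_ne (Ne.symm hb), zero_mul]
  · simp

lemma S0T_mul_P0' {m a b : ℕ} (h : a + b ≤ m) : (S0 F m b)ᵀ * P0 F m a = 0 := by
  ext i j
  rw [Matrix.mul_apply]
  apply Finset.sum_eq_zero
  intro x _
  simp only [S0, P0, Matrix.transpose_apply, Matrix.of_apply]
  have := j.2
  split_ifs <;> first | omega | simp

lemma detHom_uU {m a b : ℕ} (h : a + b ≤ m) (X : Matrix (Fin a) (Fin b) F) :
    detHom m (uU m a b h X) = 1 := by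
  apply Units.ext
  show (1 + blockEmbed m a b X).det = 1
  rw [blockEmbed_eq, Matrix.mul_assoc, det_one_add_mul_comm, Matrix.mul_assoc, S0T_mul_P0' h,
    Matrix.mul_zero, add_zero, det_one]

lemma rank_bound (χ₀ : AddChar F ℂ) (hχ₀ : χ₀ ≠ 1) {m k a b : ℕ} (hab : a + b ≤ m)
    (α : Fˣ →* ℂˣ) (T : Matrix (Fin b) (Fin a) F)
    (hT : CharAppears χ₀ (twistRep α (permRep (F := F) m k)) hab T) : T.rank ≤ k := by
  obtain ⟨f, hf0, hf⟩ := hT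
  obtain ⟨S, hS⟩ := Function.ne_iff.1 hf0
  have hS : f S ≠ 0 := hS
  let S2 : Matrix (Fin b) (Fin k) F := (S0 F m b)ᵀ * S
  have h1 : ∀ X : Matrix (Fin a) (Fin b) F, X * S2 = 0 → χ₀ (T * X).trace = 1 := by
    intro X hX
    have h2 := hf X
    rw [twist_of_det_one α _ _ (detHom_uU hab X)] at h2
    have h3 := congrFun h2 S
    have h4 : permRep m k (uU m a b hab X) f S = f S := by
      show f ((1 - blockEmbed m a b X) * S) = f S
      rw [Matrix.sub_mul, Matrix.one_mul, blockEmbed_eq, Matrix.mul_assoc, Matrix.mul_assoc]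
      show f (S - P0 F m a * (X * S2)) = f S
      rw [hX, Matrix.mul_zero, sub_zero]
    rw [h4, Pi.smul_apply, smul_eq_mul] at h3
    exact (mul_right_cancel₀ hS (by rw [one_mul]; exact h3)).symm
  have h2 : ∀ X : Matrix (Fin a) (Fin b) F, X * S2 = 0 → (T * X).trace = 0 := by
    intro X hX
    apply chi_detect χ₀ hχ₀
    intro c
    have := h1 (c • X) (by rw [Matrix.smul_mul, hX, smul_zero])
    rwa [Matrix.mul_smul, Matrix.trace_smul, smul_eq_mul] at this
  have h3 : LinearMap.range T.mulVecLin ≤ LinearMap.range S2.mulVecLin := by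
    rintro _ ⟨p, rfl⟩
    obtain ⟨c, hc⟩ := mem_range_of_kill S2 (T *ᵥ p) (fun y hy => by
      have h4 := h2 (vecMulVec p y) (by
        rw [vecMulVec_mul, hy]
        ext i j
        simp [vecMulVec_apply])
      rw [mul_vecMulVec, trace_vecMulVec] at h4
      rw [dotProduct_comm]
      exact h4)
    exact ⟨c, hc⟩
  calc T.rank ≤ S2.rank := Submodule.finrank_mono h3
    _ ≤ k := by simpa using Matrix.rank_le_card_width S2

lemma easy_dir (χ₀ : AddChar F ℂ) (hχ₀ : χ₀ ≠ 1) {n k : ℕ}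
    (π : Representation ℂ (GL (Fin n) F) V) (α : Fˣ →* ℂˣ)
    (h : Occurs (twistRep α π) (permRep n k)) : AsympRankLE χ₀ π k := by
  obtain ⟨φ, hφ0, hφc⟩ := h
  refine ⟨max n (2 * k + 2), fun m hm => ?_⟩
  have hnm : n ≤ m := le_trans (le_max_left _ _) hm
  have hkm : 2 * k + 2 ≤ m := le_trans (le_max_right _ _) hm
  refine ⟨hnm, Matrix (Fin m) (Fin k) F → ℂ, inferInstance, inferInstance, inferInstance,
    twistRep α⁻¹ (permRep m k), by omega, fun T hT => rank_bound χ₀ hχ₀ _ _ T hT, ?_⟩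
  have hφ : ∀ g u T, φ (π g u) T = ((α⁻¹ (detHom n g) : ℂˣ) : ℂ) *
      φ u (((g⁻¹ : GL (Fin n) F) : Matrix (Fin n) (Fin n) F) * T) := by
    intro g u T
    have h1 : φ (((α (detHom n g) : ℂˣ) : ℂ) • π g u) T =
        φ u (((g⁻¹ : GL (Fin n) F) : Matrix (Fin n) (Fin n) F) * T) :=
      congrFun (LinearMap.congr_fun (hφc g) u) T
    rw [← h1, map_smul, Pi.smul_apply, smul_eq_mul, ← mul_assoc]
    show _ = (((α (detHom n g))⁻¹ : ℂˣ) : ℂ) * _ * _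
    rw [Units.inv_mul, one_mul]
  let Θ : V →ₗ[ℂ] (Matrix (Fin m) (Fin k) F → ℂ) :=
    { toFun := fun v T => φ v (T.submatrix (Fin.castLE hnm) id)
      map_add' := fun u w => by ext T; simp
      map_smul' := fun c u => by ext T; simp }
  refine ⟨Θ, ?_, ?_⟩
  · intro h0
    apply hφ0
    ext u T
    let T' : Matrix (Fin m) (Fin k) F := Matrix.of fun i j => if h : (i : ℕ) < n then T ⟨i, h⟩ j else 0
    have h1 : T'.submatrix (Fin.castLE hnm) id = T := by
      ext i j
      simp [T']
    have h2 : Θ u T' = 0 := by rw [h0]; rfl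
    have h3 : φ u (T'.submatrix (Fin.castLE hnm) id) = 0 := h2
    rw [h1] at h3
    exact h3
  · intro g
    ext u T
    show φ (π g u) (T.submatrix (Fin.castLE hnm) id) =
      ((α⁻¹ (detHom m (glEmbed hnm g)) : ℂˣ) : ℂ) *
        φ u ((((glEmbed hnm g)⁻¹ : GL (Fin m) F) : Matrix (Fin m) (Fin m) F) * T |>.submatrix
          (Fin.castLE hnm) id)
    rw [hφ, detHom_glEmbed, ← map_inv (glEmbed hnm) g]
    have e : ((g⁻¹ : GL (Fin n) F) : Matrix (Fin n) (Fin n) F) *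
        T.submatrix (Fin.castLE hnm) id =
        (((glEmbed hnm g⁻¹ : GL (Fin m) F) : Matrix (Fin m) (Fin m) F) * T).submatrix
          (Fin.castLE hnm) id := by
      ext i j
      rw [Matrix.submatrix_apply, glEmbed_mul_lt hnm g⁻¹ T (Fin.castLE hnm i) (by simp)]
      rfl
    rw [← e]

lemma restrict_dir (χ₀ : AddChar F ℂ) (hχ₀ : χ₀ ≠ 1) {n m k : ℕ} {W : Type} [AddCommGroup W]
    [Module ℂ W] [FiniteDimensional ℂ W]
    (π : Representation ℂ (GL (Fin n) F) V) (hnm : n ≤ m)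
    (ρ : Representation ℂ (GL (Fin m) F) W)
    (hρ : ∀ T, CharAppears χ₀ ρ (show m / 2 + (m - m / 2) ≤ m by omega) T → T.rank ≤ k)
    (hirr : IsIrred ρ) (hocc : Occurs π (ρ.comp (glEmbed hnm)))
    (hm : 2 * k * (2 * k) + 2 * (2 * k) + 4 ≤ m) :
    ∃ α : Fˣ →* ℂˣ, Occurs (twistRep α π) (permRep n k) := by
  obtain ⟨t, ht, α, v, hv0, hv⟩ := step2 χ₀ hχ₀ ρ hρ hirr.1 (by nlinarith)
  have hex : ∃ t, Occurs (twistRep α ρ) (permRep m t) := ⟨t, occurs_of_fixed _ v hv0 hv⟩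
  classical
  have hst : Nat.find hex ≤ t := Nat.find_min' hex (occurs_of_fixed _ v hv0 hv)
  obtain ⟨s, hs, hsO, hsmin⟩ : ∃ s, s ≤ t ∧ Occurs (twistRep α ρ) (permRep m s) ∧
      ∀ r, r < s → ¬ Occurs (twistRep α ρ) (permRep m r) :=
    ⟨Nat.find hex, hst, Nat.find_spec hex, fun r hr => Nat.find_min hex hr⟩
  have hsk : s ≤ k := by
    by_contra hlt
    push Not at hlt
    obtain ⟨r, rfl⟩ : ∃ r, s = r + 1 := ⟨s - 1, by omega⟩
    have h2 : (r + 1) * (r + 1) ≤ 2 * k * (2 * k) := Nat.mul_le_mul (by omega) (by omega)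
    refine step3 χ₀ hχ₀ ρ hρ hlt (by omega) α ?_ hsO
    intro φ hφ u T z hz hT
    exact ker_zero (twistRep α ρ) (hsmin r (Nat.lt_succ_self r)) φ hφ u T z hz hT
  obtain ⟨φ, hφ0, hφc⟩ := hsO
  have hφ : ∀ g u T, φ (twistRep α ρ g u) T =
      φ u (((g⁻¹ : GL (Fin m) F) : Matrix (Fin m) (Fin m) F) * T) := by
    intro g u T
    exact congrFun (LinearMap.congr_fun (hφc g) u) T
  have hkerφ : LinearMap.ker φ = ⊥ := by
    refine (hirr.2 (LinearMap.ker φ) ?_).resolve_right ?_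
    · intro g u hu
      rw [LinearMap.mem_ker] at hu ⊢
      have h1 : φ (((α (detHom m g) : ℂˣ) : ℂ) • ρ g u) = 0 := by
        ext T
        have := hφ g u T
        rw [hu] at this
        exact this
      rw [map_smul] at h1
      exact (smul_eq_zero.1 h1).resolve_left (Units.ne_zero _)
    · intro htop
      exact hφ0 (LinearMap.ker_eq_top.1 htop)
  obtain ⟨ψ, hψ0, hψc⟩ := hocc
  have hψ : ∀ g u, ψ (π g u) = ρ (glEmbed hnm g) (ψ u) := fun g u =>
    LinearMap.congr_fun (hψc g) u
  obtain ⟨u, hu⟩ : ∃ u, ψ u ≠ 0 := by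
    by_contra hcon
    push Not at hcon
    exact hψ0 (LinearMap.ext hcon)
  have hφu : φ (ψ u) ≠ 0 := fun h => hu (LinearMap.ker_eq_bot'.1 hkerφ _ h)
  obtain ⟨T, hT⟩ := Function.ne_iff.1 hφu
  have hT : φ (ψ u) T ≠ 0 := hT
  let J : Matrix (Fin n) (Fin s) F → Matrix (Fin m) (Fin s) F := fun T' =>
    Matrix.of fun i j => if h : (i : ℕ) < n then T' ⟨i, h⟩ j else T i j
  have hJsub : ∀ T', (J T').submatrix (Fin.castLE hnm) id = T' := by
    intro T'
    ext i j
    simp [J]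
  have hJmul : ∀ (g : GL (Fin n) F) T',
      ((glEmbed hnm g : GL (Fin m) F) : Matrix (Fin m) (Fin m) F) * J T' =
        J ((g : Matrix (Fin n) (Fin n) F) * T') := by
    intro g T'
    ext i j
    by_cases hi : (i : ℕ) < n
    · rw [glEmbed_mul_lt hnm g _ i hi, hJsub]
      simp [J, hi]
    · rw [glEmbed_mul_ge hnm g _ i (by omega)]
      simp [J, hi]
  let Θ : V →ₗ[ℂ] (Matrix (Fin n) (Fin k) F → ℂ) :=
    { toFun := fun v T' => φ (ψ v) (J (T'.submatrix id (Fin.castLE hsk)))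
      map_add' := fun u w => by ext T; simp
      map_smul' := fun c u => by ext T; simp }
  refine ⟨α, Θ, ?_, ?_⟩
  · intro h0
    let T' : Matrix (Fin n) (Fin k) F :=
      Matrix.of fun i j => if h : (j : ℕ) < s then T (Fin.castLE hnm i) ⟨j, h⟩ else 0
    have h1 : J (T'.submatrix id (Fin.castLE hsk)) = T := by
      ext i j
      by_cases hi : (i : ℕ) < n
      · simp [J, T', hi]
      · simp [J, hi]
    have h2 : Θ u T' = 0 := by rw [h0]; rfl
    have h3 : φ (ψ u) (J (T'.submatrix id (Fin.castLE hsk))) = 0 := h2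
    rw [h1] at h3
    exact hT h3
  · intro g
    ext v T'
    show φ (ψ (((α (detHom n g) : ℂˣ) : ℂ) • π g v)) (J (T'.submatrix id (Fin.castLE hsk))) =
      φ (ψ v) (J ((((g⁻¹ : GL (Fin n) F) : Matrix (Fin n) (Fin n) F) * T').submatrix id
        (Fin.castLE hsk)))
    rw [map_smul, hψ]
    have h1 : ((α (detHom n g) : ℂˣ) : ℂ) • ρ (glEmbed hnm g) (ψ v) =
        twistRep α ρ (glEmbed hnm g) (ψ v) := by
      show _ = ((α (detHom m (glEmbed hnm g)) : ℂˣ) : ℂ) • ρ (glEmbed hnm g) (ψ v)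
      rw [detHom_glEmbed]
    rw [h1, hφ, ← map_inv (glEmbed hnm) g, hJmul]
    rfl

lemma charAppears_quot (χ₀ : AddChar F ℂ) {m a b : ℕ} (hab : a + b ≤ m)
    {W W' : Type} [AddCommGroup W] [Module ℂ W] [AddCommGroup W'] [Module ℂ W']
    (ρ : Representation ℂ (GL (Fin m) F) W) (ρ' : Representation ℂ (GL (Fin m) F) W')
    (f : W →ₗ[ℂ] W') (hf : Function.Surjective f) (hc : ∀ g u, f (ρ g u) = ρ' g (f u))
    (T : Matrix (Fin b) (Fin a) F) (h : CharAppears χ₀ ρ' hab T) : CharAppears χ₀ ρ hab T := by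
  obtain ⟨v, hv0, hv⟩ := h
  obtain ⟨u, rfl⟩ := hf v
  refine ⟨∑ X : Matrix (Fin a) (Fin b) F, χ₀ (-(T * X).trace) • ρ (uU m a b hab X) u, ?_, ?_⟩
  · intro h0
    have h1 := congrArg f h0
    rw [map_zero, map_sum] at h1
    have h2 : ∀ X : Matrix (Fin a) (Fin b) F,
        f (χ₀ (-(T * X).trace) • ρ (uU m a b hab X) u) = f u := by
      intro X
      rw [map_smul, hc, hv, smul_smul, ← AddChar.map_add_eq_mul, neg_add_cancel,
        AddChar.map_zero_eq_one, one_smul]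
    simp only [h2] at h1
    rw [Finset.sum_const, ← Nat.cast_smul_eq_nsmul ℂ] at h1
    rcases smul_eq_zero.1 h1 with h3 | h3
    · rw [Nat.cast_eq_zero, Finset.card_univ] at h3
      exact Fintype.card_ne_zero h3
    · exact hv0 h3
  · intro Y
    rw [map_sum, Finset.smul_sum]
    apply Fintype.sum_equiv (Equiv.addLeft Y)
    intro X
    rw [map_smul, ← Module.End.mul_apply, ← map_mul, ← uU_add, smul_smul]
    show _ = (χ₀ (T * Y).trace * χ₀ (-(T * (Y + X)).trace)) • ρ (uU m a b hab (Y + X)) u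
    rw [← AddChar.map_add_eq_mul, Matrix.mul_add, Matrix.trace_add]
    congr 2
    ring

lemma charAppears_sub (χ₀ : AddChar F ℂ) {m a b : ℕ} (hab : a + b ≤ m)
    {W W' : Type} [AddCommGroup W] [Module ℂ W] [AddCommGroup W'] [Module ℂ W']
    (ρ : Representation ℂ (GL (Fin m) F) W) (ρ' : Representation ℂ (GL (Fin m) F) W')
    (f : W' →ₗ[ℂ] W) (hf : Function.Injective f) (hc : ∀ g u, f (ρ' g u) = ρ g (f u))
    (T : Matrix (Fin b) (Fin a) F) (h : CharAppears χ₀ ρ' hab T) : CharAppears χ₀ ρ hab T := by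
  obtain ⟨v, hv0, hv⟩ := h
  refine ⟨f v, fun h => hv0 (hf (by rw [h, map_zero])), fun X => ?_⟩
  rw [← hc, hv, map_smul]

lemma reduce_irred (χ₀ : AddChar F ℂ) {n m k : ℕ}
    (π : Representation ℂ (GL (Fin n) F) V) (hnm : n ≤ m) (d : ℕ) :
    ∀ (W : Type) [AddCommGroup W] [Module ℂ W] [FiniteDimensional ℂ W]
    (ρ : Representation ℂ (GL (Fin m) F) W), Module.finrank ℂ W ≤ d →
    (∀ T, CharAppears χ₀ ρ (show m / 2 + (m - m / 2) ≤ m by omega) T → T.rank ≤ k) →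
    Occurs π (ρ.comp (glEmbed hnm)) →
    ∃ (W' : Type) (_ : AddCommGroup W') (_ : Module ℂ W') (_ : FiniteDimensional ℂ W')
      (ρ' : Representation ℂ (GL (Fin m) F) W'),
      (∀ T, CharAppears χ₀ ρ' (show m / 2 + (m - m / 2) ≤ m by omega) T → T.rank ≤ k) ∧
      Occurs π (ρ'.comp (glEmbed hnm)) ∧ IsIrred ρ' := by
  induction d with
  | zero =>
    intro W _ _ _ ρ hd hρ hocc
    obtain ⟨ψ, hψ, -⟩ := hocc
    exfalso
    apply hψ
    have : Subsingleton W := Module.finrank_zero_iff.1 (Nat.le_zero.1 hd)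
    ext u
    exact Subsingleton.elim _ _
  | succ d ih =>
    intro W _ _ _ ρ hd hρ hocc
    obtain ⟨ψ, hψ0, hψc⟩ := id hocc
    by_cases hirr : IsIrred ρ
    · exact ⟨W, inferInstance, inferInstance, inferInstance, ρ, hρ, hocc, hirr⟩
    have hne : ∃ v : W, v ≠ 0 := by
      by_contra hcon
      push Not at hcon
      exact hψ0 (LinearMap.ext fun u => hcon _)
    have hp : ∃ p : Submodule ℂ W, (∀ g, ∀ v ∈ p, ρ g v ∈ p) ∧ p ≠ ⊥ ∧ p ≠ ⊤ := by
      by_contra hcon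
      push Not at hcon
      apply hirr
      refine ⟨hne, fun p hp => ?_⟩
      by_cases h : p = ⊥
      · exact Or.inl h
      · exact Or.inr (hcon p hp h)
    obtain ⟨p, hpinv, hpbot, hptop⟩ := hp
    have hlt : Module.finrank ℂ p < Module.finrank ℂ W :=
      Submodule.finrank_lt hptop
    have hpos : 0 < Module.finrank ℂ p := by
      rw [Nat.pos_iff_ne_zero]
      intro h
      exact hpbot (Submodule.finrank_eq_zero.1 h)
    have hsum := Submodule.finrank_quotient_add_finrank p
    by_cases hq : p.mkQ.comp ψ = 0
    · let ρ' : Representation ℂ (GL (Fin m) F) p :=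
        { toFun := fun g => LinearMap.restrict (ρ g) (hpinv g)
          map_one' := by
            ext v
            show ρ 1 (v : W) = v
            rw [map_one]; rfl
          map_mul' := fun g h => by
            ext v
            show ρ (g * h) (v : W) = ρ g (ρ h v)
            rw [map_mul]; rfl }
      have hmem : ∀ u, ψ u ∈ p := by
        intro u
        have := LinearMap.congr_fun hq u
        exact (Submodule.Quotient.mk_eq_zero p).1 this
      refine ih p ρ' (by omega)
        (fun T hT => hρ T (charAppears_sub χ₀ _ ρ ρ' p.subtype Subtype.val_injective
          (fun g u => rfl) T hT)) ?_
      refine ⟨LinearMap.codRestrict p ψ hmem, ?_, ?_⟩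
      · intro h0
        apply hψ0
        ext u
        exact congrArg Subtype.val (LinearMap.congr_fun h0 u)
      · intro g
        ext u
        exact LinearMap.congr_fun (hψc g) u
    · let ρ' : Representation ℂ (GL (Fin m) F) (W ⧸ p) :=
        { toFun := fun g => p.mapQ p (ρ g) (hpinv g)
          map_one' := by
            ext v
            show p.mkQ (ρ 1 v) = p.mkQ v
            rw [map_one]; rfl
          map_mul' := fun g h => by
            ext v
            show p.mkQ (ρ (g * h) v) = p.mkQ (ρ g (ρ h v))
            rw [map_mul]; rfl }
      refine ih (W ⧸ p) ρ' (by omega)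
        (fun T hT => hρ T (charAppears_quot χ₀ _ ρ ρ' p.mkQ (Submodule.mkQ_surjective p)
          (fun g u => rfl) T hT)) ?_
      refine ⟨p.mkQ.comp ψ, hq, ?_⟩
      intro g
      ext u
      exact congrArg p.mkQ (LinearMap.congr_fun (hψc g) u)

lemma hard_dir (χ₀ : AddChar F ℂ) (hχ₀ : χ₀ ≠ 1) {n k : ℕ}
    (π : Representation ℂ (GL (Fin n) F) V) (h : AsympRankLE χ₀ π k) :
    ∃ α : Fˣ →* ℂˣ, Occurs (twistRep α π) (permRep n k) := by
  obtain ⟨M, hM⟩ := h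
  obtain ⟨hnm, W, i1, i2, i3, ρ, -, hρ, hocc⟩ :=
    hM (max M (2 * k * (2 * k) + 2 * (2 * k) + 4)) (le_max_left _ _)
  obtain ⟨W', j1, j2, j3, ρ', hρ', hocc', hirr⟩ :=
    reduce_irred χ₀ π hnm _ W ρ le_rfl hρ hocc
  exact restrict_dir χ₀ hχ₀ π hnm ρ' hρ' hirr hocc' (le_max_right _ _)

/-- Theorem 11.4: asymptotic rank equals tensor rank for all
irreducible representations of `GL_n(F_q)`.  Both ranks are expressed as the
least element (`sInf`) of the corresponding set of upper bounds. -/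
theorem asymptotic_rank_eq_tensor_rank
    (χ₀ : AddChar F ℂ) (hχ₀ : χ₀ ≠ 1)
    {n : ℕ} {V : Type} [AddCommGroup V] [Module ℂ V] [FiniteDimensional ℂ V]
    (π : Representation ℂ (GL (Fin n) F) V) (hπ : IsIrred π) :
    sInf {k : ℕ | AsympRankLE χ₀ π k}
      = sInf {k : ℕ | ∃ α : Fˣ →* ℂˣ, Occurs (twistRep α π) (permRep n k)} := by
  congr 1
  ext k
  exact ⟨fun h => hard_dir χ₀ hχ₀ π h, fun ⟨α, h⟩ => easy_dir χ₀ hχ₀ π α h⟩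

end Stmt19
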